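/- arXiv:2307.01156 — 7 statements merged into one kernel-verified Lean document; each statement's English description precedes it below -/
import Mathlib

section
/- Let (X,T) be a zero dimensional dynamical system, let W ⊆ X be a quasi-section, and let U be a clopen set with W ⊆ U. Then every point x ∈ U is recurrent to U, i.e., there exists an integer n ≥ 1 such that Tⁿ(x) ∈ U. -/
/-!
By compactness, the sets `Tⁿ(U)` with `n` in some finite set of integers already cover `X`; let `M`
bound that set from above. For any point `x`, the iterate `T^(M+1)(x)` then lies in some `Tⁿ(U)`
with `n ≤ M`, and applying `T⁻ⁿ` gives `T^(M+1-n)(x) ∈ U` with `M + 1 - n ≥ 1`.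
-/

/-- A clopen set `U` is a *complete `T`-section* if `⋃_{n ∈ ℤ} Tⁿ(U) = X`. -/
def IsCompleteSection {X : Type*} [TopologicalSpace X] (T : X ≃ₜ X) (U : Set X) : Prop :=
  (⋃ n : ℤ, ⇑(T.toEquiv ^ n) '' U) = Set.univ

/-- A closed set `W ⊆ X` is a *quasi-section* if every clopen set `U ⊇ W` is a
complete `T`-section. -/
def IsQuasiSection {X : Type*} [TopologicalSpace X] (T : X ≃ₜ X) (W : Set X) : Prop :=
  IsClosed W ∧ ∀ U : Set X, IsClopen U → W ⊆ U → IsCompleteSection T U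

theorem exists_forall_exists_le_mem_of_iUnion_eq_univ {X ι : Type*} [TopologicalSpace X]
    [CompactSpace X] [Preorder ι] [IsDirectedOrder ι] [Nonempty ι] {V : ι → Set X}
    (hV : ∀ i, IsOpen (V i)) (hcover : ⋃ i, V i = Set.univ) :
    ∃ M, ∀ x, ∃ i ≤ M, x ∈ V i := by
  obtain ⟨t, ht⟩ := isCompact_univ.elim_finite_subcover V hV hcover.ge
  obtain ⟨M, hM⟩ := t.exists_le
  refine ⟨M, fun x => ?_⟩
  obtain ⟨i, hi, hx⟩ := Set.mem_iUnion₂.mp (ht (Set.mem_univ x))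
  exact ⟨i, hM i hi, hx⟩

theorem zpow_apply_mem_image_zpow_iff {α : Type*} (σ : Equiv.Perm α) {s : Set α} {m n : ℤ}
    {x : α} : (σ ^ m) x ∈ ⇑(σ ^ n) '' s ↔ (σ ^ (m - n)) x ∈ s := by
  have hsplit : (σ ^ m) x = (σ ^ n) ((σ ^ (m - n)) x) := by
    rw [← Equiv.Perm.mul_apply, ← zpow_add, add_sub_cancel]
  rw [hsplit, (σ ^ n).injective.mem_set_image]

theorem isOpenMap_toEquiv_zpow {X : Type*} [TopologicalSpace X] (T : X ≃ₜ X) (n : ℤ) :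
    IsOpenMap ⇑(T.toEquiv ^ n) := by
  let toPerm : (X ≃ₜ X) →* Equiv.Perm X :=
    { toFun := Homeomorph.toEquiv, map_one' := rfl, map_mul' := fun _ _ => rfl }
  have coe_zpow : ⇑(T ^ n) = ⇑(T.toEquiv ^ n) := congrArg DFunLike.coe (map_zpow toPerm T n)
  exact coe_zpow ▸ (T ^ n).isOpenMap

theorem IsCompleteSection.exists_forall_exists_le_mem_image {X : Type*} [TopologicalSpace X]
    [CompactSpace X] {T : X ≃ₜ X} {U : Set X} (h : IsCompleteSection T U) (hU : IsOpen U) :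
    ∃ M : ℤ, ∀ x, ∃ n ≤ M, x ∈ ⇑(T.toEquiv ^ n) '' U :=
  exists_forall_exists_le_mem_of_iUnion_eq_univ
    (fun n => isOpenMap_toEquiv_zpow T n U hU) h

theorem stmt1_general {X : Type*} [TopologicalSpace X] [CompactSpace X] (T : X ≃ₜ X)
    (U : Set X) (hU : IsOpen U) (h : IsCompleteSection T U) (x : X) :
    ∃ n : ℕ, 1 ≤ n ∧ (T.toEquiv ^ n) x ∈ U := by
  obtain ⟨M, hM⟩ := h.exists_forall_exists_le_mem_image hU
  obtain ⟨n, hnM, hn⟩ := hM ((T.toEquiv ^ (M + 1)) x)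
  have hreturn : (T.toEquiv ^ (M + 1 - n)) x ∈ U := (zpow_apply_mem_image_zpow_iff _).mp hn
  lift M + 1 - n to ℕ using by lia with k hk
  exact ⟨k, by lia, by rwa [zpow_natCast] at hreturn⟩

/-- If `W` is a quasi-section for a zero dimensional dynamical system `(X,T)` and `U` is a
clopen set with `W ⊆ U`, then every point of `U` is recurrent to `U`: there exists `n ≥ 1`
with `Tⁿ(x) ∈ U`. -/
theorem stmt1 {X : Type*} [TopologicalSpace X] [CompactSpace X]
    [TopologicalSpace.MetrizableSpace X] [TotallyDisconnectedSpace X] [Nonempty X]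
    (T : X ≃ₜ X) (W : Set X) (hW : IsQuasiSection T W)
    (U : Set X) (hU : IsClopen U) (hWU : W ⊆ U) :
    ∀ x ∈ U, ∃ n : ℕ, 1 ≤ n ∧ (T.toEquiv ^ n) x ∈ U :=
  fun x _ => stmt1_general T U hU.isOpen (hW.2 U hU hWU) x
end

section
/- Let (X,T) be a zero dimensional dynamical system, let A ⊆ X be a nonempty clopen set which is a complete T-section, and let P be a finite partition of X into clopen sets. Then there exists a Kakutani–Rokhlin partition Q for (X,T) such that the top of Q equals A and Q refines P, i.e., every element of Q is contained in some element of P. -/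
/-- A Kakutani–Rokhlin partition for `(X,T)`: a finite family
`{Z(k,j) : 1 ≤ k ≤ K, 1 ≤ j ≤ J(k)}` of pairwise disjoint clopen sets covering `X`, with
`T(Z(k,j)) = Z(k,j+1)` for `1 ≤ j < J(k)` and `T` mapping the top onto the base. -/
structure KRPartition (X : Type*) [TopologicalSpace X] (T : X ≃ₜ X) where
  K : ℕ
  K_pos : 1 ≤ K
  J : ℕ → ℕ
  J_pos : ∀ k ∈ Set.Icc 1 K, 1 ≤ J k
  Z : ℕ → ℕ → Set X
  clopen : ∀ k ∈ Set.Icc 1 K, ∀ j ∈ Set.Icc 1 (J k), IsClopen (Z k j)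
  disj : ∀ k ∈ Set.Icc 1 K, ∀ j ∈ Set.Icc 1 (J k), ∀ k' ∈ Set.Icc 1 K,
    ∀ j' ∈ Set.Icc 1 (J k'), (k, j) ≠ (k', j') → Disjoint (Z k j) (Z k' j')
  cover : (⋃ k ∈ Set.Icc 1 K, ⋃ j ∈ Set.Icc 1 (J k), Z k j) = Set.univ
  tower : ∀ k ∈ Set.Icc 1 K, ∀ j, 1 ≤ j → j < J k → ⇑T '' Z k j = Z k (j + 1)
  top_to_base : ⇑T '' (⋃ k ∈ Set.Icc 1 K, Z k (J k)) = ⋃ k ∈ Set.Icc 1 K, Z k 1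

/-- The top `⋃_{k=1}^{K} Z(k,J(k))` of a K-R partition. -/
def KRPartition.top {X : Type*} [TopologicalSpace X] {T : X ≃ₜ X}
    (P : KRPartition X T) : Set X :=
  ⋃ k ∈ Set.Icc 1 P.K, P.Z k (P.J k)

/-- The collection of elements (clopen pieces) of a K-R partition. -/
def KRPartition.parts {X : Type*} [TopologicalSpace X] {T : X ≃ₜ X}
    (P : KRPartition X T) : Set (Set X) :=
  {S | ∃ k ∈ Set.Icc 1 P.K, ∃ j ∈ Set.Icc 1 (P.J k), S = P.Z k j}

/-!
Every point of `X` is uniquely `Tʲ a` with `a ∈ A` and `1 ≤ j ≤ r(a)`, where `r` is the first return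
time to `A`. Compactness makes every orbit visit `A` in both directions, and `A` being clopen makes
`r` locally constant. Given a locally constant `φ` whose fibers refine `P`, cut `A` according to the
word `φ(T a), …, φ(T^{r(a)} a)`: this word is locally constant, hence takes finitely many values,
and each of them is the sequence of `φ`-values along one tower of height `r(a)`, whose last level
lies in `A`.
-/

open Filter Function Set Topology

section ReturnTime

variable {X : Type*} {f : X → X} {A : Set X} {x y a b : X} {i j n : ℕ}

/-- The first return time of `x` to `A`: the least `n > 0` with `fⁿ x ∈ A`. It is `0` if there is no
such `n`, so that `0 < returnTime f A x` says that `x` does return to `A`. -/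
noncomputable def returnTime (f : X → X) (A : Set X) (x : X) : ℕ :=
  sInf {n | 0 < n ∧ f^[n] x ∈ A}

theorem returnTime_pos_of_iterate_mem (hn : 0 < n) (hx : f^[n] x ∈ A) : 0 < returnTime f A x :=
  (Nat.sInf_mem (s := {n | 0 < n ∧ f^[n] x ∈ A}) ⟨n, hn, hx⟩).1

theorem returnTime_le_of_iterate_mem (hn : 0 < n) (hx : f^[n] x ∈ A) : returnTime f A x ≤ n :=
  Nat.sInf_le ⟨hn, hx⟩

theorem iterate_returnTime_mem (hx : 0 < returnTime f A x) : f^[returnTime f A x] x ∈ A :=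
  (Nat.sInf_mem (Nat.nonempty_of_pos_sInf hx)).2

theorem returnTime_congr (hx : 0 < returnTime f A x)
    (h : ∀ i ≤ returnTime f A x, f^[i] y ∈ A ↔ f^[i] x ∈ A) :
    returnTime f A y = returnTime f A x := by
  have hy : f^[returnTime f A x] y ∈ A := (h _ le_rfl).2 (iterate_returnTime_mem hx)
  have hle : returnTime f A y ≤ returnTime f A x := returnTime_le_of_iterate_mem hx hy
  have hpos : 0 < returnTime f A y := returnTime_pos_of_iterate_mem hx hy
  exact hle.antisymm (returnTime_le_of_iterate_mem hpos ((h _ hle).1 (iterate_returnTime_mem hpos)))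

theorem exists_mem_Icc_returnTime_iterate_eq (hpos : ∀ a ∈ A, 0 < returnTime f A a)
    (hy : ∃ n, 0 < n ∧ y ∈ f^[n] '' A) :
    ∃ a ∈ A, ∃ n ∈ Icc 1 (returnTime f A a), f^[n] a = y := by
  classical
  obtain ⟨hn, a, ha, hay⟩ := Nat.find_spec hy
  refine ⟨a, ha, Nat.find hy, ⟨hn, ?_⟩, hay⟩
  by_contra! hlt
  have hlater : y ∈ f^[Nat.find hy - returnTime f A a] '' A := by
    refine ⟨_, iterate_returnTime_mem (hpos a ha), ?_⟩
    rw [← iterate_add_apply, Nat.sub_add_cancel hlt.le, hay]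
  exact Nat.find_min hy (Nat.sub_lt hn (hpos a ha)) ⟨Nat.sub_pos_of_lt hlt, hlater⟩

theorem le_of_iterate_eq_iterate (hf : Injective f) (ha : a ∈ A) (hi : 0 < i)
    (hj : j ≤ returnTime f A b) (h : f^[i] a = f^[j] b) : j ≤ i := by
  by_contra! hlt
  have hab : f^[j - i] b = a := by
    apply hf.iterate i
    rw [← iterate_add_apply, Nat.add_sub_cancel' hlt.le, h]
  have hreturn : returnTime f A b ≤ j - i :=
    returnTime_le_of_iterate_mem (Nat.sub_pos_of_lt hlt) (hab ▸ ha)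
  omega

theorem eq_and_eq_of_iterate_eq_iterate (hf : Injective f) (ha : a ∈ A) (hb : b ∈ A)
    (hi : i ∈ Icc 1 (returnTime f A a)) (hj : j ∈ Icc 1 (returnTime f A b))
    (h : f^[i] a = f^[j] b) : a = b ∧ i = j := by
  obtain rfl : i = j := le_antisymm (le_of_iterate_eq_iterate hf hb hj.1 hi.2 h.symm)
    (le_of_iterate_eq_iterate hf ha hi.1 hj.2 h)
  exact ⟨hf.iterate i h, rfl⟩

end ReturnTime

section ReturnTower

variable {X α : Type*} {f : X → X} {A : Set X} {φ : X → α} {v v' : List α} {a b : X} {j j' : ℕ}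

/-- The return word of `x`: the values of `φ` along the orbit segment `f x, …, fⁿ x`, where `n` is
the first return time of `x` to `A`. -/
noncomputable def returnWord (f : X → X) (A : Set X) (φ : X → α) (x : X) : List α :=
  (List.range (returnTime f A x)).map fun i => φ (f^[i + 1] x)

/-- Level `j` of the tower over the points of `A` with return word `v`. The levels of the tower are
those with `1 ≤ j ≤ v.length`; level `0` is the set of these points itself. -/
def returnTower (f : X → X) (A : Set X) (φ : X → α) (v : List α) (j : ℕ) : Set X :=
  f^[j] '' {a ∈ A | returnWord f A φ a = v}

@[simp]
theorem length_returnWord (x : X) : (returnWord f A φ x).length = returnTime f A x := by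
  simp [returnWord]

theorem apply_iterate_eq_of_returnWord_eq (h : returnWord f A φ a = returnWord f A φ b)
    (hj : j ∈ Icc 1 (returnTime f A a)) : φ (f^[j] a) = φ (f^[j] b) := by
  have htime : returnTime f A a = returnTime f A b := by
    simpa only [length_returnWord] using congrArg List.length h
  obtain ⟨i, rfl⟩ := Nat.exists_eq_add_of_le' hj.1
  rw [returnWord, returnWord, ← htime, List.map_inj_left] at h
  exact h i (List.mem_range.2 hj.2)

theorem returnTower_subset_fiber (ha : returnWord f A φ a = v) (hj : j ∈ Icc 1 v.length) :
    returnTower f A φ v j ⊆ φ ⁻¹' {φ (f^[j] a)} := by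
  rintro _ ⟨b, ⟨-, hb⟩, rfl⟩
  rw [← hb, length_returnWord] at hj
  exact apply_iterate_eq_of_returnWord_eq (hb.trans ha.symm) hj

theorem image_returnTower (v : List α) (j : ℕ) :
    f '' returnTower f A φ v j = returnTower f A φ v (j + 1) := by
  rw [returnTower, returnTower, image_image]
  simp only [iterate_succ_apply']

theorem disjoint_returnTower (hf : Injective f) (hj : j ∈ Icc 1 v.length)
    (hj' : j' ∈ Icc 1 v'.length) (h : (v, j) ≠ (v', j')) :
    Disjoint (returnTower f A φ v j) (returnTower f A φ v' j') := by
  rw [disjoint_left]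
  rintro _ ⟨a, ⟨ha, rfl⟩, rfl⟩ ⟨b, ⟨hb, rfl⟩, hab⟩
  rw [length_returnWord] at hj hj'
  obtain ⟨rfl, rfl⟩ := eq_and_eq_of_iterate_eq_iterate hf hb ha hj' hj hab
  exact h rfl

theorem biUnion_returnTower_one : ⋃ v ∈ returnWord f A φ '' A, returnTower f A φ v 1 = f '' A := by
  refine Subset.antisymm (iUnion₂_subset fun _ _ => image_mono (sep_subset _ _)) ?_
  rintro _ ⟨a, ha, rfl⟩
  exact mem_biUnion (mem_image_of_mem _ ha) ⟨a, ⟨ha, rfl⟩, rfl⟩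

theorem biUnion_returnTower_length (hpos : ∀ a ∈ A, 0 < returnTime f A a)
    (hback : ∀ y, ∃ n, 0 < n ∧ y ∈ f^[n] '' A) :
    ⋃ v ∈ returnWord f A φ '' A, returnTower f A φ v v.length = A := by
  refine Subset.antisymm (iUnion₂_subset ?_) fun y hy => ?_
  · rintro _ - _ ⟨a, ⟨ha, rfl⟩, rfl⟩
    rw [length_returnWord]
    exact iterate_returnTime_mem (hpos a ha)
  · obtain ⟨a, ha, j, hj, rfl⟩ := exists_mem_Icc_returnTime_iterate_eq hpos (hback y)
    obtain rfl : j = returnTime f A a := hj.2.antisymm (returnTime_le_of_iterate_mem hj.1 hy)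
    exact mem_biUnion (mem_image_of_mem _ ha) ⟨a, ⟨ha, rfl⟩, by rw [length_returnWord]⟩

theorem biUnion_returnTower (hpos : ∀ a ∈ A, 0 < returnTime f A a)
    (hback : ∀ y, ∃ n, 0 < n ∧ y ∈ f^[n] '' A) :
    ⋃ v ∈ returnWord f A φ '' A, ⋃ j ∈ Icc 1 v.length, returnTower f A φ v j = univ := by
  refine eq_univ_of_forall fun y => ?_
  obtain ⟨a, ha, j, hj, rfl⟩ := exists_mem_Icc_returnTime_iterate_eq hpos (hback y)
  rw [← length_returnWord (φ := φ)] at hj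
  exact mem_biUnion (mem_image_of_mem _ ha) (mem_biUnion hj ⟨a, ⟨ha, rfl⟩, rfl⟩)

end ReturnTower

section Topology

variable {X α : Type*} [TopologicalSpace X] {A : Set X}

theorem eventually_mem_iff_mem_of_isClopen (hA : IsClopen A) (x : X) :
    ∀ᶠ y in 𝓝 x, (y ∈ A ↔ x ∈ A) := by
  by_cases hx : x ∈ A
  · filter_upwards [hA.isOpen.mem_nhds hx] with y hy using iff_of_true hy hx
  · filter_upwards [hA.compl.isOpen.mem_nhds hx] with y hy using iff_of_false hy hx

theorem exists_isLocallyConstant_fiber_subset [CompactSpace X] {P : Set (Set X)}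
    (hP : ∀ S ∈ P, IsClopen S) (hcover : ⋃₀ P = univ) :
    ∃ φ : X → Set (Set X), IsLocallyConstant φ ∧ ∀ x, ∃ S ∈ P, φ ⁻¹' {φ x} ⊆ S := by
  obtain ⟨P', hP'P, hfin, hcover'⟩ := isCompact_univ.elim_finite_subcover_image (c := id)
    (fun S hS => (hP S hS).isOpen) (hcover.ge.trans_eq sUnion_eq_biUnion)
  refine ⟨fun x => {S ∈ P' | x ∈ S}, (IsLocallyConstant.iff_eventually_eq _).2 fun x => ?_,
    fun x => ?_⟩
  · have hmem : ∀ᶠ y in 𝓝 x, ∀ S ∈ P', (y ∈ S ↔ x ∈ S) :=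
      (eventually_all_finite hfin).2 fun S hS =>
        eventually_mem_iff_mem_of_isClopen (hP S (hP'P hS)) x
    filter_upwards [hmem] with y hy
    exact sep_ext_iff.2 hy
  · obtain ⟨S, hS, hxS⟩ := mem_iUnion₂.1 (hcover' (mem_univ x))
    exact ⟨S, hP'P hS, fun y hy => ((sep_ext_iff.1 hy) S hS).2 hxS⟩

theorem isLocallyConstant_returnTime {f : X → X} (hf : Continuous f) (hA : IsClopen A)
    (hpos : ∀ x, 0 < returnTime f A x) : IsLocallyConstant (returnTime f A) := by
  refine (IsLocallyConstant.iff_eventually_eq _).2 fun x => ?_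
  have hmem : ∀ᶠ y in 𝓝 x, ∀ i ∈ Iic (returnTime f A x), (f^[i] y ∈ A ↔ f^[i] x ∈ A) :=
    (eventually_all_finite (finite_Iic _)).2 fun i _ =>
      eventually_mem_iff_mem_of_isClopen (hA.preimage (hf.iterate i)) x
  filter_upwards [hmem] with y hy using returnTime_congr (hpos x) hy

theorem isLocallyConstant_returnWord {f : X → X} (hf : Continuous f) (hA : IsClopen A)
    (hpos : ∀ x, 0 < returnTime f A x) {φ : X → α} (hφ : IsLocallyConstant φ) :
    IsLocallyConstant (returnWord f A φ) := by
  refine (IsLocallyConstant.iff_eventually_eq _).2 fun x => ?_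
  have hvalues : ∀ᶠ y in 𝓝 x, ∀ i ∈ Iio (returnTime f A x), φ (f^[i + 1] y) = φ (f^[i + 1] x) :=
    (eventually_all_finite (finite_Iio _)).2 fun i _ =>
      (hφ.comp_continuous (hf.iterate (i + 1))).eventually_eq x
  filter_upwards [(isLocallyConstant_returnTime hf hA hpos).eventually_eq x, hvalues]
    with y htime hy
  rw [returnWord, returnWord, htime]
  exact List.map_congr_left fun i hi => hy i (List.mem_range.1 hi)

variable {T : X ≃ₜ X}

theorem coe_homeomorph_zpow (T : X ≃ₜ X) (n : ℤ) : ⇑(T ^ n) = ⇑(T.toEquiv ^ n) :=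
  let toPerm : (X ≃ₜ X) →* Equiv.Perm X := ⟨⟨Homeomorph.toEquiv, rfl⟩, fun _ _ => rfl⟩
  congrArg DFunLike.coe (map_zpow toPerm T n)

theorem homeomorph_zpow_natCast_apply (T : X ≃ₜ X) (n : ℕ) (x : X) :
    (T ^ (n : ℤ)) x = T^[n] x := by
  rw [coe_homeomorph_zpow, zpow_natCast, Equiv.Perm.coe_pow]
  rfl

theorem isClopen_returnTower (hA : IsClopen A) (hpos : ∀ x, 0 < returnTime T A x) {φ : X → α}
    (hφ : IsLocallyConstant φ) (v : List α) (j : ℕ) : IsClopen (returnTower T A φ v j) := by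
  have hbase : IsClopen {a ∈ A | returnWord T A φ a = v} :=
    hA.inter ((isLocallyConstant_returnWord T.continuous hA hpos hφ).isClopen_fiber v)
  rw [returnTower, ← funext (homeomorph_zpow_natCast_apply T j)]
  exact ⟨(T ^ (j : ℤ)).isClosed_image.2 hbase.isClosed, (T ^ (j : ℤ)).isOpen_image.2 hbase.isOpen⟩

namespace IsCompleteSection

theorem exists_zpow_mem (h : IsCompleteSection T A) (x : X) : ∃ n : ℤ, (T ^ n) x ∈ A := by
  obtain ⟨n, a, ha, rfl⟩ := mem_iUnion.1 (h.ge (mem_univ x))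
  refine ⟨-n, ?_⟩
  rwa [coe_homeomorph_zpow, zpow_neg, ← Equiv.Perm.mul_apply, inv_mul_cancel, Equiv.Perm.one_apply]

theorem exists_finset_zpow_mem [CompactSpace X] (h : IsCompleteSection T A) (hA : IsOpen A) :
    ∃ s : Finset ℤ, ∀ x, ∃ n ∈ s, (T ^ n) x ∈ A := by
  obtain ⟨s, hs⟩ := isCompact_univ.elim_finite_subcover (fun n : ℤ => ⇑(T ^ n) ⁻¹' A)
    (fun n => hA.preimage (T ^ n).continuous) fun x _ => mem_iUnion.2 (h.exists_zpow_mem x)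
  exact ⟨s, fun x => by simpa only [mem_iUnion₂, exists_prop, mem_preimage] using hs (mem_univ x)⟩

theorem returnTime_pos [CompactSpace X] (h : IsCompleteSection T A) (hA : IsOpen A) (x : X) :
    0 < returnTime T A x := by
  obtain ⟨s, hs⟩ := h.exists_finset_zpow_mem hA
  obtain ⟨m, hm⟩ := s.bddBelow
  obtain ⟨n, hns, hn⟩ := hs ((T ^ (1 - m)) x)
  have hmn : m ≤ n := hm hns
  obtain ⟨k, hk⟩ := Int.eq_ofNat_of_zero_le (show 0 ≤ n + (1 - m) by omega)
  rw [← Homeomorph.mul_apply, ← zpow_add, hk, homeomorph_zpow_natCast_apply] at hn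
  exact returnTime_pos_of_iterate_mem (by omega) hn

theorem exists_pos_mem_image_iterate [CompactSpace X] (h : IsCompleteSection T A) (hA : IsOpen A)
    (y : X) : ∃ n, 0 < n ∧ y ∈ T^[n] '' A := by
  obtain ⟨s, hs⟩ := h.exists_finset_zpow_mem hA
  obtain ⟨m, hm⟩ := s.bddAbove
  obtain ⟨n, hns, hn⟩ := hs ((T ^ (-1 - m)) y)
  have hnm : n ≤ m := hm hns
  obtain ⟨k, hk⟩ := Int.eq_ofNat_of_zero_le (show 0 ≤ -(n + (-1 - m)) by omega)
  rw [← Homeomorph.mul_apply, ← zpow_add] at hn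
  refine ⟨k, by omega, _, hn, ?_⟩
  rw [← homeomorph_zpow_natCast_apply, ← hk, ← Homeomorph.mul_apply, ← zpow_add, neg_add_cancel,
    zpow_zero, Homeomorph.one_apply]

theorem nonempty [Nonempty X] (h : IsCompleteSection T A) : A.Nonempty :=
  let ⟨_, hn⟩ := h.exists_zpow_mem (Classical.arbitrary X)
  ⟨_, hn⟩

end IsCompleteSection

end Topology

theorem exists_bijOn_Icc_one_ncard {β : Type*} [Nonempty β] {s : Set β} (hs : s.Finite) :
    ∃ w : ℕ → β, BijOn w (Icc 1 s.ncard) s :=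
  (finite_Icc 1 s.ncard).exists_bijOn_of_encard_eq <| by
    rw [← hs.cast_ncard_eq, ← (finite_Icc 1 s.ncard).cast_ncard_eq]
    simp [ncard_eq_toFinset_card']

theorem IsCompleteSection.exists_krPartition_subset_fiber {X α : Type*} [TopologicalSpace X]
    [CompactSpace X] [Nonempty X] {T : X ≃ₜ X} {A : Set X} (hsec : IsCompleteSection T A)
    (hA : IsClopen A) {φ : X → α} (hφ : IsLocallyConstant φ) :
    ∃ Q : KRPartition X T, Q.top = A ∧ ∀ S ∈ Q.parts, ∃ x, S ⊆ φ ⁻¹' {φ x} := by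
  have hpos : ∀ x, 0 < returnTime T A x := hsec.returnTime_pos hA.isOpen
  have hback : ∀ y, ∃ n, 0 < n ∧ y ∈ T^[n] '' A := hsec.exists_pos_mem_image_iterate hA.isOpen
  have hfin : (returnWord T A φ '' A).Finite :=
    (isLocallyConstant_returnWord T.continuous hA hpos hφ).range_finite.subset
      (image_subset_range _ _)
  obtain ⟨w, hw⟩ := exists_bijOn_Icc_one_ncard hfin
  have hreindex (g : List α → Set X) : ⋃ k ∈ Icc 1 (returnWord T A φ '' A).ncard, g (w k) =
      ⋃ v ∈ returnWord T A φ '' A, g v := by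
    rw [← biUnion_image, hw.image_eq]
  have htop := (hreindex _).trans
    (biUnion_returnTower_length (φ := φ) (fun a _ => hpos a) hback)
  refine ⟨{
    K := (returnWord T A φ '' A).ncard
    K_pos := (ncard_pos hfin).2 (hsec.nonempty.image _)
    J := fun k => (w k).length
    J_pos := fun k hk => by
      obtain ⟨a, -, ha⟩ := hw.mapsTo hk
      rw [← ha, length_returnWord]
      exact hpos a
    Z := fun k j => returnTower T A φ (w k) j
    clopen := fun k _ j _ => isClopen_returnTower hA hpos hφ (w k) j
    disj := fun k hk j hj k' hk' j' hj' hne =>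
      disjoint_returnTower T.injective hj hj' fun h => hne <|
        Prod.ext (hw.injOn hk hk' (Prod.ext_iff.1 h).1) (Prod.ext_iff.1 h).2
    cover := (hreindex _).trans (biUnion_returnTower (fun a _ => hpos a) hback)
    tower := fun k _ j _ _ => image_returnTower (w k) j
    top_to_base := by rw [htop, hreindex (returnTower T A φ · 1), biUnion_returnTower_one] },
    htop, ?_⟩
  rintro _ ⟨k, hk, j, hj, rfl⟩
  obtain ⟨a, -, ha⟩ := hw.mapsTo hk
  exact ⟨_, returnTower_subset_fiber ha hj⟩

theorem stmt3_general {X : Type*} [TopologicalSpace X] [CompactSpace X] [Nonempty X]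
    (T : X ≃ₜ X) (A : Set X) (hA : IsClopen A) (hAsec : IsCompleteSection T A)
    (P : Set (Set X)) (hPclopen : ∀ S ∈ P, IsClopen S) (hPcover : ⋃₀ P = univ) :
    ∃ Q : KRPartition X T, Q.top = A ∧ ∀ S ∈ Q.parts, ∃ S' ∈ P, S ⊆ S' := by
  obtain ⟨φ, hφ, hfiber⟩ := exists_isLocallyConstant_fiber_subset hPclopen hPcover
  obtain ⟨Q, htop, hQ⟩ := hAsec.exists_krPartition_subset_fiber hA hφ
  refine ⟨Q, htop, fun S hS => ?_⟩
  obtain ⟨x, hSx⟩ := hQ S hS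
  obtain ⟨S', hS', hxS'⟩ := hfiber x
  exact ⟨S', hS', hSx.trans hxS'⟩

/-- Let `(X,T)` be a zero dimensional dynamical system, `A` a nonempty clopen complete
`T`-section, and `P` a finite partition of `X` into clopen sets. Then there is a
Kakutani–Rokhlin partition `Q` for `(X,T)` whose top equals `A` and which refines `P`. -/
theorem stmt3 {X : Type*} [TopologicalSpace X] [CompactSpace X]
    [TopologicalSpace.MetrizableSpace X] [TotallyDisconnectedSpace X] [Nonempty X]
    (T : X ≃ₜ X) (A : Set X) (hAne : A.Nonempty) (hA : IsClopen A)
    (hAsec : IsCompleteSection T A)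
    (P : Finset (Set X)) (hPclopen : ∀ S ∈ P, IsClopen S)
    (hPdisj : ∀ S ∈ P, ∀ S' ∈ P, S ≠ S' → Disjoint S S')
    (hPcover : ⋃₀ (P : Set (Set X)) = Set.univ) :
    ∃ Q : KRPartition X T, Q.top = A ∧ ∀ S ∈ Q.parts, ∃ S' ∈ P, S ⊆ S' :=
  stmt3_general T A hA hAsec P hPclopen hPcover
end

section
/- Let (X,T) be a zero dimensional dynamical system and let W ⊆ X be a nonempty closed set. Then the following are equivalent: (i) there exists a system of Kakutani–Rokhlin partitions (Pₙ)_{n≥0} for (X,T,W) such that ⋂_{n≥0} Zₙ = W, where Zₙ denotes the top of Pₙ; (ii) W is a quasi-section for (X,T). -/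
/-- A system of K-R partitions for `(X,T,W)`: a sequence of K-R partitions, each with
`W` contained in its top, each refining the previous one, with decreasing tops, and whose
union of elements is a basis for the topology of `X`. -/
structure KRSystem (X : Type*) [TopologicalSpace X] (T : X ≃ₜ X) (W : Set X) where
  P : ℕ → KRPartition X T
  W_subset_top : ∀ n, W ⊆ (P n).top
  refines : ∀ n, ∀ S ∈ (P (n + 1)).parts, ∃ S' ∈ (P n).parts, S ⊆ S'
  top_mono : ∀ n, (P (n + 1)).top ⊆ (P n).top
  isBasis : TopologicalSpace.IsTopologicalBasis (⋃ n, (P n).parts)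

/-!
If `U` is a clopen complete section, compactness makes every forward and every backward orbit
enter `U`, so `X` is cut into orbit segments, each running from `T '' U` up to `U`. Reading the
values of a locally constant function `g` along the segment of `x` gives a word, which is itself a
locally constant function of `x` and so takes finitely many values. Grouping the points by word and
by position in the segment gives a K-R partition with top `U` on each of whose elements `g` is
constant. For a quasi-section `W` this applies to each member of a decreasing sequence of clopen
sets with intersection `W`, with `g` chosen to record the preceding partition and one more clopen
set. Conversely, the top of any K-R partition is a complete section, and by compactness a clopen
neighbourhood of `W` contains one of the tops.
-/

section

open Set Topology

section HittingTime

variable {α : Type*} {f : α → α} {U : Set α} {x : α}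

/-- The first time `n ≥ 0` at which the forward orbit of `x` under `f` is in `U`; it has the junk
value `0` if there is none. -/
noncomputable def hittingTime (f : α → α) (U : Set α) (x : α) : ℕ :=
  sInf {n | f^[n] x ∈ U}

theorem hittingTime_of_mem (hx : x ∈ U) : hittingTime f U x = 0 :=
  Nat.sInf_eq_zero.2 (Or.inl hx)

theorem hittingTime_eq_zero_iff (h : ∃ n, f^[n] x ∈ U) : hittingTime f U x = 0 ↔ x ∈ U :=
  ⟨fun h₀ => (Nat.sInf_eq_zero.1 h₀).resolve_right (nonempty_iff_ne_empty.1 h), hittingTime_of_mem⟩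

theorem hittingTime_of_notMem (h : ∃ n, f^[n] x ∈ U) (hx : x ∉ U) :
    hittingTime f U x = hittingTime f U (f x) + 1 :=
  (Nat.sInf_add (Nat.one_le_iff_ne_zero.2 (mt (hittingTime_eq_zero_iff h).1 hx))).symm

variable [TopologicalSpace α]

theorem isLocallyConstant_hittingTime (hf : Continuous f) (hU : IsClopen U)
    (h : ∀ x, ∃ n, f^[n] x ∈ U) : IsLocallyConstant (hittingTime f U) := by
  refine IsLocallyConstant.iff_isOpen_fiber.2 fun n => ?_
  induction n with
  | zero =>
    have fiber_zero : hittingTime f U ⁻¹' {0} = U := ext fun x => hittingTime_eq_zero_iff (h x)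
    rw [fiber_zero]
    exact hU.isOpen
  | succ n ih =>
    have fiber_succ : hittingTime f U ⁻¹' {n + 1} = Uᶜ ∩ f ⁻¹' (hittingTime f U ⁻¹' {n}) := by
      ext x
      by_cases hx : x ∈ U
      · simp [hx, hittingTime_of_mem hx]
      · simp [hx, hittingTime_of_notMem (h x) hx]
    rw [fiber_succ]
    exact hU.compl.isOpen.inter (ih.preimage hf)

theorem continuous_iterate_of_isLocallyConstant (hf : Continuous f) {n : α → ℕ}
    (hn : IsLocallyConstant n) : Continuous fun x => f^[n x] x :=
  continuous_iff_continuousAt.2 fun x => (hf.iterate (n x)).continuousAt.congr <|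
    (hn.eventually_eq x).mono fun y hy => congrArg (f^[·] y) hy.symm

theorem isLocallyConstant_setOf_mem {F : Set (Set α)} (hF : F.Finite)
    (hFc : ∀ A ∈ F, IsClopen A) : IsLocallyConstant fun x => {A ∈ F | x ∈ A} := by
  refine (IsLocallyConstant.iff_eventually_eq _).2 fun x => ?_
  have same_membership : ∀ᶠ y in 𝓝 x, ∀ A ∈ F, (y ∈ A ↔ x ∈ A) :=
    (Filter.eventually_all_finite hF).2 fun A hA => by
      by_cases hx : x ∈ A
      · filter_upwards [(hFc A hA).isOpen.mem_nhds hx] with y hy using iff_of_true hy hx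
      · filter_upwards [(hFc A hA).compl.isOpen.mem_nhds hx] with y hy using iff_of_false hy hx
  exact same_membership.mono fun y hy => sep_ext_iff.2 hy

variable {κ : Type*} {g : α → κ}

/-- The word of values of `g` along the orbit of `x` until its first visit to `U`, inclusive. -/
noncomputable def itinerary (f : α → α) (U : Set α) (g : α → κ) (x : α) : List κ :=
  (List.range (hittingTime f U x + 1)).map fun i => g (f^[i] x)

theorem isLocallyConstant_itinerary (hf : Continuous f) (hU : IsClopen U)
    (h : ∀ x, ∃ n, f^[n] x ∈ U) (hg : IsLocallyConstant g) :
    IsLocallyConstant (itinerary f U g) := by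
  refine (IsLocallyConstant.iff_eventually_eq _).2 fun x => ?_
  have same_letters : ∀ᶠ y in 𝓝 x, ∀ i ∈ Finset.range (hittingTime f U x + 1),
      g (f^[i] y) = g (f^[i] x) :=
    (Filter.eventually_all_finset _).2 fun i _ =>
      (hg.comp_continuous (hf.iterate i)).eventually_eq x
  filter_upwards [(isLocallyConstant_hittingTime hf hU h).eventually_eq x, same_letters]
    with y same_length same_letters
  rw [itinerary, itinerary, same_length]
  exact List.map_congr_left fun i hi => same_letters i (by simpa using hi)

end HittingTime

variable {X : Type*} [TopologicalSpace X] {T : X ≃ₜ X} {U W : Set X}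

section CompleteSection

theorem coe_homeomorph_pow (T : X ≃ₜ X) (n : ℕ) : ⇑(T ^ n) = T^[n] :=
  hom_coe_pow (fun e : X ≃ₜ X => ⇑e) rfl (fun _ _ => rfl) T n

theorem isCompleteSection_iff_exists_zpow_apply_mem :
    IsCompleteSection T U ↔ ∀ x, ∃ n : ℤ, (T ^ n) x ∈ U := by
  let toPerm : (X ≃ₜ X) →* Equiv.Perm X := MonoidHom.mk' Homeomorph.toEquiv fun _ _ => rfl
  have image_zpow (n : ℤ) : ⇑(T.toEquiv ^ n) '' U = ⇑(T ^ (-n)) ⁻¹' U := by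
    rw [Equiv.image_eq_preimage_symm, zpow_neg]
    exact congrArg (fun e : Equiv.Perm X => e.symm ⁻¹' U) (map_zpow toPerm T n).symm
  simp only [IsCompleteSection, image_zpow, eq_univ_iff_forall, mem_iUnion, mem_preimage]
  exact forall_congr' fun x => (Equiv.neg ℤ).exists_congr_left.trans (by simp)

theorem IsCompleteSection.symm (h : IsCompleteSection T U) : IsCompleteSection T.symm U := by
  rw [isCompleteSection_iff_exists_zpow_apply_mem] at h ⊢
  intro x
  obtain ⟨n, hn⟩ := h x
  refine ⟨-n, ?_⟩
  change (T⁻¹ ^ (-n)) x ∈ U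
  rwa [inv_zpow, zpow_neg, inv_inv]

theorem IsCompleteSection.mono {V : Set X} (h : IsCompleteSection T U) (hUV : U ⊆ V) :
    IsCompleteSection T V :=
  eq_univ_of_univ_subset <| (Eq.superset h).trans <| iUnion_mono fun _ => image_mono hUV

theorem isCompleteSection_of_exists_iterate_mem (h : ∀ x, ∃ n, T^[n] x ∈ U) :
    IsCompleteSection T U :=
  isCompleteSection_iff_exists_zpow_apply_mem.2 fun x =>
    let ⟨n, hn⟩ := h x
    ⟨n, by rwa [zpow_natCast, coe_homeomorph_pow]⟩

-- The points that visit `U` at some time `≥ -N` form an open set increasing with `N`. By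
-- compactness some `N` works for all points, and then `T ^ N` shifts the visits to times `≥ 0`.
theorem IsCompleteSection.exists_iterate_mem [CompactSpace X] (h : IsCompleteSection T U)
    (hU : IsOpen U) (x : X) : ∃ n, T^[n] x ∈ U := by
  let V (N : ℕ) : Set X := ⋃ k ≥ -(N : ℤ), ⇑(T ^ k) ⁻¹' U
  have V_open (N : ℕ) : IsOpen (V N) :=
    isOpen_biUnion fun k _ => hU.preimage (T ^ k).continuous
  have V_mono : Monotone V := fun M N hMN =>
    biUnion_subset_biUnion_left fun k (hk : -(M : ℤ) ≤ k) => show -(N : ℤ) ≤ k by lia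
  have V_cover : univ ⊆ ⋃ N, V N := fun y _ => by
    obtain ⟨k, hk⟩ := isCompleteSection_iff_exists_zpow_apply_mem.1 h y
    exact mem_iUnion.2 ⟨k.natAbs, mem_biUnion (show -(k.natAbs : ℤ) ≤ k by lia) hk⟩
  obtain ⟨N, hN⟩ := isCompact_univ.elim_directed_cover V V_open V_cover V_mono.directed_le
  obtain ⟨k, hk, hkU⟩ := mem_iUnion₂.1 (hN (mem_univ ((T ^ N) x)))
  obtain ⟨n, hn⟩ := Int.eq_ofNat_of_zero_le (show 0 ≤ k + N by lia)
  refine ⟨n, ?_⟩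
  rwa [mem_preimage, ← zpow_natCast, ← Homeomorph.mul_apply, ← zpow_add, hn, zpow_natCast,
    coe_homeomorph_pow] at hkU

end CompleteSection

section Tower

variable {κ : Type*} {g : X → κ} {x : X}

/-- The number of steps from the last visit to `T '' U` on the backward orbit of `x` up to `x`;
levels are counted from `0`, whereas the index `j` in a `KRPartition` starts at `1`. -/
noncomputable def towerLevel (T : X ≃ₜ X) (U : Set X) (x : X) : ℕ :=
  hittingTime T.symm U (T.symm x)

/-- The point of `T '' U` at which the orbit segment of `x` starts. -/
noncomputable def towerBase (T : X ≃ₜ X) (U : Set X) (x : X) : X :=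
  T.symm^[towerLevel T U x] x

/-- The word of values of `g` along the whole orbit segment of `x`, from `T '' U` to `U`. It serves
as the index of the tower containing `x`. -/
noncomputable def towerWord (T : X ≃ₜ X) (U : Set X) (g : X → κ) (x : X) : List κ :=
  itinerary T U g (towerBase T U x)

/-- The set of points at height `j` in the tower indexed by the word `w`, with the heights
numbered from `1` as in `KRPartition`. -/
def towerCell (T : X ≃ₜ X) (U : Set X) (g : X → κ) (w : List κ) (j : ℕ) : Set X :=
  {x | towerWord T U g x = w ∧ towerLevel T U x + 1 = j}

theorem iterate_towerLevel_towerBase : T^[towerLevel T U x] (towerBase T U x) = x :=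
  T.rightInverse_symm.iterate _ x

theorem towerLevel_apply_of_mem (hx : x ∈ U) : towerLevel T U (T x) = 0 :=
  hittingTime_of_mem (by rwa [T.symm_apply_apply])

theorem towerLevel_apply_of_notMem (hb : ∀ x, ∃ n, T.symm^[n] x ∈ U) (hx : x ∉ U) :
    towerLevel T U (T x) = towerLevel T U x + 1 := by
  rw [towerLevel, T.symm_apply_apply]
  exact hittingTime_of_notMem (hb x) hx

theorem towerBase_apply_of_notMem (hb : ∀ x, ∃ n, T.symm^[n] x ∈ U) (hx : x ∉ U) :
    towerBase T U (T x) = towerBase T U x := by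
  rw [towerBase, towerLevel_apply_of_notMem hb hx, Function.iterate_succ_apply,
    T.symm_apply_apply, towerBase]

theorem towerWord_apply_of_notMem (hb : ∀ x, ∃ n, T.symm^[n] x ∈ U) (hx : x ∉ U) :
    towerWord T U g (T x) = towerWord T U g x := by
  rw [towerWord, towerBase_apply_of_notMem hb hx, towerWord]

theorem hittingTime_towerBase (hf : ∀ x, ∃ n, T^[n] x ∈ U) (hb : ∀ x, ∃ n, T.symm^[n] x ∈ U)
    (x : X) : hittingTime T U (towerBase T U x) = towerLevel T U x + hittingTime T U x := by
  induction hn : towerLevel T U x generalizing x with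
  | zero => rw [towerBase, hn, Function.iterate_zero_apply, zero_add]
  | succ n ih =>
    obtain ⟨y, rfl⟩ := T.surjective x
    have hy : y ∉ U := fun hy => by simp [towerLevel_apply_of_mem hy] at hn
    have level_y : towerLevel T U y = n := by
      rwa [towerLevel_apply_of_notMem hb hy, Nat.add_right_cancel_iff] at hn
    rw [towerBase_apply_of_notMem hb hy, ih y level_y, hittingTime_of_notMem (hf y) hy]
    lia

theorem length_towerWord (hf : ∀ x, ∃ n, T^[n] x ∈ U) (hb : ∀ x, ∃ n, T.symm^[n] x ∈ U)
    (x : X) : (towerWord T U g x).length = towerLevel T U x + hittingTime T U x + 1 := by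
  rw [towerWord, itinerary, List.length_map, List.length_range, hittingTime_towerBase hf hb]

theorem getElem?_towerWord (hf : ∀ x, ∃ n, T^[n] x ∈ U) (hb : ∀ x, ∃ n, T.symm^[n] x ∈ U)
    (x : X) : (towerWord T U g x)[towerLevel T U x]? = some (g x) := by
  have level_lt : towerLevel T U x < hittingTime T U (towerBase T U x) + 1 := by
    rw [hittingTime_towerBase hf hb]
    lia
  rw [towerWord, itinerary, List.getElem?_map, List.getElem?_range level_lt, Option.map_some,
    iterate_towerLevel_towerBase]

theorem isLocallyConstant_towerLevel (hU : IsClopen U) (hb : ∀ x, ∃ n, T.symm^[n] x ∈ U) :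
    IsLocallyConstant (towerLevel T U) :=
  (isLocallyConstant_hittingTime T.symm.continuous hU hb).comp_continuous T.symm.continuous

theorem isLocallyConstant_towerWord (hU : IsClopen U) (hf : ∀ x, ∃ n, T^[n] x ∈ U)
    (hb : ∀ x, ∃ n, T.symm^[n] x ∈ U) (hg : IsLocallyConstant g) :
    IsLocallyConstant (towerWord T U g) :=
  (isLocallyConstant_itinerary T.continuous hU hf hg).comp_continuous <|
    continuous_iterate_of_isLocallyConstant T.symm.continuous (isLocallyConstant_towerLevel hU hb)

theorem isClopen_towerCell (hU : IsClopen U) (hf : ∀ x, ∃ n, T^[n] x ∈ U)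
    (hb : ∀ x, ∃ n, T.symm^[n] x ∈ U) (hg : IsLocallyConstant g) (w : List κ) (j : ℕ) :
    IsClopen (towerCell T U g w j) :=
  ((isLocallyConstant_towerWord hU hf hb hg).isClopen_fiber w).inter
    (((isLocallyConstant_towerLevel hU hb).comp (· + 1)).isClopen_fiber j)

theorem eq_of_mem_towerCell (hf : ∀ x, ∃ n, T^[n] x ∈ U) (hb : ∀ x, ∃ n, T.symm^[n] x ∈ U)
    {w : List κ} {j : ℕ} {y : X} (hx : x ∈ towerCell T U g w j) (hy : y ∈ towerCell T U g w j) :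
    g x = g y := by
  have same_word : towerWord T U g x = towerWord T U g y := hx.1.trans hy.1.symm
  have same_level : towerLevel T U x = towerLevel T U y :=
    Nat.add_right_cancel (hx.2.trans hy.2.symm)
  rw [← Option.some_inj, ← getElem?_towerWord hf hb, ← getElem?_towerWord hf hb, same_word,
    same_level]

theorem image_towerCell (hf : ∀ x, ∃ n, T^[n] x ∈ U) (hb : ∀ x, ∃ n, T.symm^[n] x ∈ U)
    {w : List κ} {j : ℕ} (hj : 1 ≤ j) (hjw : j < w.length) :
    T '' towerCell T U g w j = towerCell T U g w (j + 1) := by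
  ext y
  obtain ⟨x, rfl⟩ := T.surjective y
  rw [T.injective.mem_set_image]
  by_cases hx : x ∈ U
  · have notMem_left : x ∉ towerCell T U g w j := by
      rintro ⟨rfl, rfl⟩
      rw [length_towerWord hf hb, hittingTime_of_mem hx] at hjw
      lia
    have notMem_right : T x ∉ towerCell T U g w (j + 1) := by
      rintro ⟨-, level_eq⟩
      rw [towerLevel_apply_of_mem hx] at level_eq
      lia
    exact iff_of_false notMem_left notMem_right
  · simp only [towerCell, mem_ofPred_eq, towerWord_apply_of_notMem hb hx,
      towerLevel_apply_of_notMem hb hx, Nat.add_right_cancel_iff]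

theorem mem_towerCell_length_iff (hf : ∀ x, ∃ n, T^[n] x ∈ U)
    (hb : ∀ x, ∃ n, T.symm^[n] x ∈ U) {w : List κ} :
    x ∈ towerCell T U g w w.length ↔ towerWord T U g x = w ∧ x ∈ U := by
  refine and_congr_right ?_
  rintro rfl
  rw [length_towerWord hf hb, ← hittingTime_eq_zero_iff (hf x)]
  lia

theorem mem_towerCell_one_iff (hb : ∀ x, ∃ n, T.symm^[n] x ∈ U) {w : List κ} :
    x ∈ towerCell T U g w 1 ↔ towerWord T U g x = w ∧ x ∈ T '' U := by
  rw [T.image_eq_preimage_symm, mem_preimage, ← hittingTime_eq_zero_iff (hb _), towerCell,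
    mem_ofPred_eq, Nat.add_eq_right, towerLevel]

theorem iUnion_towerCell_length (hf : ∀ x, ∃ n, T^[n] x ∈ U)
    (hb : ∀ x, ∃ n, T.symm^[n] x ∈ U) :
    ⋃ w ∈ range (towerWord T U g), towerCell T U g w w.length = U := by
  ext x
  simp [mem_towerCell_length_iff hf hb]

theorem iUnion_towerCell_one (hb : ∀ x, ∃ n, T.symm^[n] x ∈ U) :
    ⋃ w ∈ range (towerWord T U g), towerCell T U g w 1 = T '' U := by
  ext x
  simp [mem_towerCell_one_iff hb]

end Tower

namespace KRPartition

/-- A K-R partition resolves `A` if `A` is a union of elements of the partition, that is, no element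
meets both `A` and its complement. -/
def Resolves (P : KRPartition X T) (A : Set X) : Prop :=
  ∀ S ∈ P.parts, S ⊆ A ∨ Disjoint S A

theorem exists_top_eq_of_isLocallyConstant [CompactSpace X] [Nonempty X] (hU : IsClopen U)
    (h : IsCompleteSection T U) {κ : Type*} {g : X → κ} (hg : IsLocallyConstant g) :
    ∃ P : KRPartition X T, P.top = U ∧ ∀ S ∈ P.parts, ∀ x ∈ S, ∀ y ∈ S, g x = g y := by
  have hf := h.exists_iterate_mem hU.isOpen
  have hb := h.symm.exists_iterate_mem hU.isOpen
  have words_finite := (isLocallyConstant_towerWord hU hf hb hg).range_finite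
  set words := range (towerWord T U g)
  obtain ⟨v, hv⟩ : ∃ v, BijOn v (Icc 1 words.ncard) words :=
    (finite_Icc 1 words.ncard).exists_bijOn_of_encard_eq <| by
      rw [← (finite_Icc _ _).cast_ncard_eq, ← words_finite.cast_ncard_eq, ncard_Icc_nat,
        Nat.add_sub_cancel]
  have biUnion_words (cell : List κ → Set X) :
      ⋃ k ∈ Icc 1 words.ncard, cell (v k) = ⋃ w ∈ words, cell w := by
    rw [← biUnion_image (f := v) (g := cell), hv.image_eq]
  have tops_eq : ⋃ k ∈ Icc 1 words.ncard, towerCell T U g (v k) (v k).length = U :=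
    (biUnion_words fun w => towerCell T U g w w.length).trans (iUnion_towerCell_length hf hb)
  have bases_eq : ⋃ k ∈ Icc 1 words.ncard, towerCell T U g (v k) 1 = T '' U :=
    (biUnion_words fun w => towerCell T U g w 1).trans (iUnion_towerCell_one hb)
  let P : KRPartition X T :=
    { K := words.ncard
      K_pos := (ncard_pos words_finite).2 (range_nonempty _)
      J k := (v k).length
      J_pos k hk := by
        obtain ⟨x, hx⟩ := hv.mapsTo hk
        rw [← hx, length_towerWord hf hb]
        lia
      Z k := towerCell T U g (v k)
      clopen k _ j _ := isClopen_towerCell hU hf hb hg (v k) j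
      disj k hk j _ k' hk' j' _ hne := disjoint_left.2 fun x ⟨hxk, hxj⟩ ⟨hxk', hxj'⟩ =>
        hne (Prod.ext (hv.injOn hk hk' (hxk.symm.trans hxk')) (hxj.symm.trans hxj'))
      cover := eq_univ_of_forall fun x => by
        obtain ⟨k, hk, hkx⟩ := hv.surjOn (mem_range_self x)
        refine mem_biUnion hk (mem_biUnion ⟨Nat.le_add_left 1 _, ?_⟩ ⟨hkx.symm, rfl⟩)
        rw [hkx, length_towerWord hf hb]
        lia
      tower k _ j hj hjk := image_towerCell hf hb hj hjk
      top_to_base := by rw [tops_eq, bases_eq] }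
  refine ⟨P, tops_eq, ?_⟩
  rintro _ ⟨k, _, j, _, rfl⟩ x hx y hy
  exact eq_of_mem_towerCell hf hb hx hy

theorem exists_top_eq_of_finite [CompactSpace X] [Nonempty X] (hU : IsClopen U)
    (h : IsCompleteSection T U) {F : Set (Set X)} (hF : F.Finite) (hFc : ∀ A ∈ F, IsClopen A) :
    ∃ P : KRPartition X T, P.top = U ∧ ∀ A ∈ F, P.Resolves A := by
  obtain ⟨P, hPU, hP⟩ := exists_top_eq_of_isLocallyConstant hU h
    (isLocallyConstant_setOf_mem hF hFc)
  refine ⟨P, hPU, fun A hA S hS => or_iff_not_imp_right.2 fun hSA y hy => ?_⟩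
  obtain ⟨x, hxS, hxA⟩ := not_disjoint_iff.1 hSA
  exact (sep_ext_iff.1 (hP S hS x hxS y hy) A hA).1 hxA

variable (P : KRPartition X T)

theorem finite_parts : P.parts.Finite :=
  ((finite_Icc 1 P.K).biUnion fun k _ => (finite_Icc 1 (P.J k)).image (P.Z k)).subset <| by
    rintro _ ⟨k, hk, j, hj, rfl⟩
    exact mem_biUnion hk (mem_image_of_mem _ hj)

variable {P} in
theorem isClopen_of_mem_parts {S : Set X} (hS : S ∈ P.parts) : IsClopen S := by
  obtain ⟨k, hk, j, hj, rfl⟩ := hS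
  exact P.clopen k hk j hj

theorem isClopen_top : IsClopen P.top :=
  (finite_Icc _ _).isClopen_biUnion fun k hk => P.clopen k hk _ ⟨P.J_pos k hk, le_rfl⟩

theorem exists_mem_parts (x : X) : ∃ S ∈ P.parts, x ∈ S := by
  obtain ⟨k, hk, hx⟩ := mem_iUnion₂.1 (P.cover.symm.subset (mem_univ x))
  obtain ⟨j, hj, hx⟩ := mem_iUnion₂.1 hx
  exact ⟨P.Z k j, ⟨k, hk, j, hj, rfl⟩, hx⟩

variable {P} in
theorem iterate_mem_Z {k j : ℕ} (hk : k ∈ Icc 1 P.K) (hj : 1 ≤ j) {x : X} (hx : x ∈ P.Z k j)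
    (d : ℕ) (hd : j + d ≤ P.J k) : T^[d] x ∈ P.Z k (j + d) := by
  induction d with
  | zero => exact hx
  | succ d ih =>
    rw [Function.iterate_succ_apply', ← add_assoc, ← P.tower k hk (j + d) (by lia) (by lia)]
    exact mem_image_of_mem T (ih (by lia))

theorem isCompleteSection_top : IsCompleteSection T P.top := by
  refine isCompleteSection_of_exists_iterate_mem fun x => ?_
  obtain ⟨_, ⟨k, hk, j, ⟨hj, hjk⟩, rfl⟩, hx⟩ := P.exists_mem_parts x
  refine ⟨P.J k - j, mem_biUnion hk ?_⟩
  have reach_top := iterate_mem_Z hk hj hx (P.J k - j) (by lia)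
  rwa [Nat.add_sub_cancel' hjk] at reach_top

variable {P} in
theorem exists_subset_mem_parts [Nonempty X] {S : Set X} {Q : KRPartition X T}
    (hP : ∀ A ∈ Q.parts, P.Resolves A) (hS : S ∈ P.parts) : ∃ A ∈ Q.parts, S ⊆ A := by
  obtain rfl | ⟨x, hx⟩ := S.eq_empty_or_nonempty
  · obtain ⟨A, hA, -⟩ := Q.exists_mem_parts (Classical.arbitrary X)
    exact ⟨A, hA, empty_subset A⟩
  · obtain ⟨A, hA, hxA⟩ := Q.exists_mem_parts x
    exact ⟨A, hA, (hP A hA S hS).resolve_right (not_disjoint_iff.2 ⟨x, hx, hxA⟩)⟩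

theorem isTopologicalBasis_iUnion_parts {P : ℕ → KRPartition X T} {C : ℕ → Set X}
    (hC : TopologicalSpace.IsTopologicalBasis (range C)) (hP : ∀ n, (P n).Resolves (C n)) :
    TopologicalSpace.IsTopologicalBasis (⋃ n, (P n).parts) := by
  refine TopologicalSpace.isTopologicalBasis_of_isOpen_of_nhds (fun S hS => ?_) fun x V hx hV => ?_
  · obtain ⟨n, hn⟩ := mem_iUnion.1 hS
    exact (isClopen_of_mem_parts hn).isOpen
  · obtain ⟨_, ⟨n, rfl⟩, hxn, hnV⟩ := hC.exists_subset_of_mem_open hx hV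
    obtain ⟨S, hS, hxS⟩ := (P n).exists_mem_parts x
    have hSn : S ⊆ C n := (hP n S hS).resolve_right (not_disjoint_iff.2 ⟨x, hxS, hxn⟩)
    exact ⟨S, mem_iUnion.2 ⟨n, hS⟩, hxS, hSn.trans hnV⟩

end KRPartition

section QuasiSection

theorem KRSystem.isQuasiSection [CompactSpace X] (S : KRSystem X T W)
    (hS : ⋂ n, (S.P n).top = W) : IsQuasiSection T W := by
  have top_isClosed (n : ℕ) : IsClosed (S.P n).top := (S.P n).isClopen_top.isClosed
  refine ⟨hS ▸ isClosed_iInter top_isClosed, fun U hU hWU => ?_⟩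
  obtain ⟨n, hn⟩ := exists_subset_nhds_of_compactSpace
    (antitone_nat_of_succ_le S.top_mono).directed_ge top_isClosed
    fun x hx => hU.isOpen.mem_nhds (hWU (hS ▸ hx))
  exact (S.P n).isCompleteSection_top.mono hn

variable [CompactSpace X] [T2Space X] [TotallyDisconnectedSpace X] [SecondCountableTopology X]

theorem countable_setOf_isClopen : {A : Set X | IsClopen A}.Countable := by
  have := TopologicalSpace.Clopens.countable_iff_secondCountable.2 ‹SecondCountableTopology X›
  exact (countable_range fun A : TopologicalSpace.Clopens X => (A : Set X)).mono
    fun A (hA : IsClopen A) => mem_range.2 ⟨⟨A, hA⟩, rfl⟩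

theorem exists_antitone_isClopen_iInter_eq (hW : IsClosed W) :
    ∃ U : ℕ → Set X, Antitone U ∧ (∀ n, IsClopen (U n)) ∧ ⋂ n, U n = W := by
  have neighbourhoods_countable : {A | IsClopen A ∧ W ⊆ A}.Countable :=
    countable_setOf_isClopen.mono fun A hA => hA.1
  obtain ⟨V, hV⟩ := neighbourhoods_countable.exists_eq_range ⟨univ, isClopen_univ, subset_univ W⟩
  have V_spec (n : ℕ) : IsClopen (V n) ∧ W ⊆ V n := hV.superset (mem_range_self n)
  refine ⟨dissipate V, antitone_dissipate,
    fun n => (finite_Iic n).isClopen_biInter fun i _ => (V_spec i).1, ?_⟩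
  rw [iInter_dissipate]
  refine Subset.antisymm (fun x hx => ?_) (subset_iInter fun n => (V_spec n).2)
  by_contra hxW
  obtain ⟨A, hA, hxA, hAW⟩ := compact_exists_isClopen_in_isOpen hW.isOpen_compl hxW
  obtain ⟨n, hn⟩ := hV.subset ⟨hA.compl, subset_compl_comm.1 hAW⟩
  exact hn.subset (mem_iInter.1 hx n) hxA

theorem IsQuasiSection.exists_krSystem [Nonempty X] (hW : IsQuasiSection T W) :
    ∃ S : KRSystem X T W, ⋂ n, (S.P n).top = W := by
  obtain ⟨C, hC⟩ := (countable_setOf_isClopen (X := X)).exists_eq_range ⟨∅, isClopen_empty⟩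
  have C_clopen (n : ℕ) : IsClopen (C n) := hC.superset (mem_range_self n)
  obtain ⟨U, U_anti, U_clopen, rfl⟩ := exists_antitone_isClopen_iInter_eq hW.1
  have U_complete (n : ℕ) : IsCompleteSection T (U n) := hW.2 _ (U_clopen n) (iInter_subset U n)
  have exists_next (n : ℕ) (Q : KRPartition X T) : ∃ P : KRPartition X T,
      P.top = U n ∧ ∀ A ∈ insert (C n) Q.parts, P.Resolves A :=
    KRPartition.exists_top_eq_of_finite (U_clopen n) (U_complete n) (Q.finite_parts.insert _) <|
      forall_mem_insert.2 ⟨C_clopen n, fun A hA => KRPartition.isClopen_of_mem_parts hA⟩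
  choose next next_top next_resolves using exists_next
  obtain ⟨P₀, -⟩ := KRPartition.exists_top_eq_of_finite (U_clopen 0) (U_complete 0) finite_empty
    fun _ => False.elim
  let P (n : ℕ) : KRPartition X T := n.rec P₀ next
  have top_eq (n : ℕ) : (P (n + 1)).top = U n := next_top n (P n)
  exact ⟨{
    P n := P (n + 1)
    W_subset_top n := (iInter_subset U n).trans (top_eq n).superset
    refines n S hS := KRPartition.exists_subset_mem_parts
      (fun A hA => next_resolves (n + 1) (P (n + 1)) A (mem_insert_of_mem _ hA)) hS
    top_mono n := by simpa only [top_eq] using U_anti n.le_succ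
    isBasis := KRPartition.isTopologicalBasis_iUnion_parts
      (hC ▸ isTopologicalBasis_isClopen) fun n =>
        next_resolves n (P n) _ (mem_insert _ _) }, iInter_congr top_eq⟩

end QuasiSection

end

/-- For a zero dimensional dynamical system `(X,T)` and a nonempty closed set `W ⊆ X`, the
following are equivalent: (i) there is a system of K-R partitions for `(X,T,W)` whose tops
intersect exactly in `W`; (ii) `W` is a quasi-section for `(X,T)`. -/
theorem stmt5 {X : Type*} [TopologicalSpace X] [CompactSpace X]
    [TopologicalSpace.MetrizableSpace X] [TotallyDisconnectedSpace X] [Nonempty X]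
    (T : X ≃ₜ X) (W : Set X) (hWcl : IsClosed W) (hWne : W.Nonempty) :
    (∃ S : KRSystem X T W, (⋂ n, (S.P n).top) = W) ↔ IsQuasiSection T W :=
  ⟨fun ⟨S, hS⟩ => S.isQuasiSection hS, fun hW => hW.exists_krSystem⟩
end

section
/- Let (X,T) be a zero dimensional dynamical system, W ⊆ X a closed set, and (Qₙ)_{n≥0} a system of Kakutani–Rokhlin partitions for (X,T,W) with tops Wₙ satisfying ⋂_{n≥0} Wₙ = W. Let P be any finite partition of X into clopen sets and let Z be any clopen set with W ⊆ Z. Then there exists n such that Qₙ refines P (every element of Qₙ is contained in some element of P) and Wₙ ⊆ Z. -/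
open Set Topology

/-!
Compactness yields finitely many parts `B i ∈ Q (m i)` that cover `X` and each lie in a member of
the given cover. If `n ≥ m i` for all `i`, a nonempty part of `Q n` meets some `B i`. It is
contained in a single part of `Q (m i)`, which must be `B i` by disjointness.
The tops are closed and decreasing, so a second compactness argument puts them eventually inside
any open set containing their intersection.
-/

theorem subset_of_isCofinalFor_of_inter_nonempty {α : Type*} {A B : Set (Set α)}
    (hAB : IsCofinalFor A B) (hB : B.PairwiseDisjoint id) {s t : Set α} (hs : s ∈ A) (ht : t ∈ B)
    (hst : (s ∩ t).Nonempty) : s ⊆ t := by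
  obtain ⟨x, hxs, hxt⟩ := hst
  obtain ⟨t', ht', hst'⟩ := hAB hs
  have htt' : t' = t := hB.elim_set ht' ht x (hst' hxs) hxt
  exact htt' ▸ hst'

theorem exists_isCofinalFor_of_isTopologicalBasis_iUnion {X ι : Type*} [TopologicalSpace X]
    [CompactSpace X] [Nonempty X] [Preorder ι] [IsDirectedOrder ι] [Nonempty ι]
    {Q : ι → Set (Set X)} (hdisj : ∀ n, (Q n).PairwiseDisjoint id)
    (hrefines : ∀ ⦃m n⦄, m ≤ n → IsCofinalFor (Q n) (Q m))
    (hbasis : TopologicalSpace.IsTopologicalBasis (⋃ n, Q n))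
    {C : Set (Set X)} (hCopen : ∀ U ∈ C, IsOpen U) (hCcover : ⋃₀ C = univ) :
    ∃ n, IsCofinalFor (Q n) C := by
  classical
  have hlocal : ∀ x, ∃ m, ∃ B ∈ Q m, x ∈ B ∧ ∃ U ∈ C, B ⊆ U := fun x ↦ by
    obtain ⟨U, hU, hxU⟩ := sUnion_eq_univ_iff.mp hCcover x
    obtain ⟨B, hB, hxB, hBU⟩ := hbasis.exists_subset_of_mem_open hxU (hCopen U hU)
    obtain ⟨m, hBm⟩ := mem_iUnion.mp hB
    exact ⟨m, B, hBm, hxB, U, hU, hBU⟩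
  choose m B hBm hxB U hU hBU using hlocal
  have hBnhds : ∀ x, B x ∈ 𝓝 x := fun x ↦
    (hbasis.isOpen (mem_iUnion_of_mem (m x) (hBm x))).mem_nhds (hxB x)
  obtain ⟨F, hF⟩ := CompactSpace.elim_nhds_subcover B hBnhds
  obtain ⟨n, hn⟩ := (F.image m).exists_le
  refine ⟨n, fun S hS ↦ ?_⟩
  rcases S.eq_empty_or_nonempty with rfl | ⟨y, hyS⟩
  · exact ⟨U (Classical.arbitrary X), hU _, empty_subset _⟩
  · obtain ⟨x, hxF, hyB⟩ := mem_iUnion₂.mp (hF.symm ▸ mem_univ y : y ∈ ⋃ x ∈ F, B x)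
    have hSB : S ⊆ B x := subset_of_isCofinalFor_of_inter_nonempty
      (hrefines (hn _ (Finset.mem_image_of_mem m hxF))) (hdisj (m x)) hS (hBm x) ⟨y, hyS, hyB⟩
    exact ⟨U x, hU x, hSB.trans (hBU x)⟩

namespace KRPartition

variable {X : Type*} [TopologicalSpace X] {T : X ≃ₜ X} (P : KRPartition X T)

theorem pairwiseDisjoint_parts : P.parts.PairwiseDisjoint id := by
  rintro _ ⟨k, hk, j, hj, rfl⟩ _ ⟨k', hk', j', hj', rfl⟩ hne
  refine P.disj k hk j hj k' hk' j' hj' fun h ↦ hne ?_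
  obtain ⟨rfl, rfl⟩ := Prod.mk.inj h
  rfl

theorem isClosed_top : IsClosed P.top :=
  (finite_Icc 1 P.K).isClosed_biUnion fun k hk ↦
    (P.clopen k hk (P.J k) ⟨P.J_pos k hk, le_rfl⟩).isClosed

end KRPartition

namespace KRSystem

variable {X : Type*} [TopologicalSpace X] {T : X ≃ₜ X} {W : Set X} (Q : KRSystem X T W)

theorem antitone_top : Antitone fun n ↦ (Q.P n).top :=
  antitone_nat_of_succ_le Q.top_mono

theorem isCofinalFor_parts {m n : ℕ} (hmn : m ≤ n) :
    IsCofinalFor (Q.P n).parts (Q.P m).parts := by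
  induction n, hmn using Nat.le_induction with
  | base => exact .rfl
  | succ n _ ih => exact IsCofinalFor.trans (Q.refines n) ih

theorem exists_parts_isCofinalFor [CompactSpace X] [Nonempty X] {C : Set (Set X)}
    (hCopen : ∀ U ∈ C, IsOpen U) (hCcover : ⋃₀ C = univ) :
    ∃ n, IsCofinalFor (Q.P n).parts C :=
  exists_isCofinalFor_of_isTopologicalBasis_iUnion (fun n ↦ (Q.P n).pairwiseDisjoint_parts)
    (fun _ _ ↦ Q.isCofinalFor_parts) Q.isBasis hCopen hCcover

theorem exists_top_subset [CompactSpace X] {Z : Set X} (hZ : IsOpen Z)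
    (hQZ : (⋂ n, (Q.P n).top) ⊆ Z) : ∃ n, (Q.P n).top ⊆ Z :=
  exists_subset_nhds_of_compactSpace Q.antitone_top.directed_ge
    (fun n ↦ (Q.P n).isClosed_top) fun _ hx ↦ hZ.mem_nhds (hQZ hx)

end KRSystem

theorem stmt6_general {X : Type*} [TopologicalSpace X] [CompactSpace X] [Nonempty X]
    {T : X ≃ₜ X} {W : Set X} (Q : KRSystem X T W)
    {C : Set (Set X)} (hCopen : ∀ U ∈ C, IsOpen U) (hCcover : ⋃₀ C = univ)
    {Z : Set X} (hZ : IsOpen Z) (hQZ : (⋂ n, (Q.P n).top) ⊆ Z) :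
    ∃ n, (∀ S ∈ (Q.P n).parts, ∃ U ∈ C, S ⊆ U) ∧ (Q.P n).top ⊆ Z := by
  obtain ⟨a, ha⟩ := Q.exists_parts_isCofinalFor hCopen hCcover
  obtain ⟨b, hb⟩ := Q.exists_top_subset hZ hQZ
  exact ⟨max a b, (Q.isCofinalFor_parts (le_max_left a b)).trans ha,
    (Q.antitone_top (le_max_right a b)).trans hb⟩

/-- Let `(X,T)` be a zero dimensional dynamical system, `W ⊆ X` closed, and `(Qₙ)` a system
of K-R partitions for `(X,T,W)` whose tops `Wₙ` satisfy `⋂ₙ Wₙ = W`. For any finite clopen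
partition `P` of `X` and any clopen `Z ⊇ W` there is `n` such that `Qₙ` refines `P` and the
top of `Qₙ` is contained in `Z`. -/
theorem stmt6 {X : Type*} [TopologicalSpace X] [CompactSpace X]
    [TopologicalSpace.MetrizableSpace X] [TotallyDisconnectedSpace X] [Nonempty X]
    (T : X ≃ₜ X) (W : Set X) (hWcl : IsClosed W)
    (Q : KRSystem X T W) (hQtop : (⋂ n, (Q.P n).top) = W)
    (P : Finset (Set X)) (hPclopen : ∀ S ∈ P, IsClopen S)
    (hPdisj : ∀ S ∈ P, ∀ S' ∈ P, S ≠ S' → Disjoint S S')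
    (hPcover : ⋃₀ (P : Set (Set X)) = Set.univ)
    (Z : Set X) (hZ : IsClopen Z) (hWZ : W ⊆ Z) :
    ∃ n, (∀ S ∈ (Q.P n).parts, ∃ S' ∈ P, S ⊆ S') ∧ (Q.P n).top ⊆ Z :=
  stmt6_general Q (fun S hS ↦ (hPclopen S hS).isOpen) hPcover hZ.isOpen (hQtop.trans_subset hWZ)
end

section
/- Let (X,T) be a zero dimensional dynamical system and let x₀ ∈ X. Then the singleton {x₀} is a quasi-section for (X,T) if and only if (X,T) is essentially minimal and x₀ belongs to the unique minimal set of (X,T). -/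
/-- `M` is a minimal set of `(X,T)`: `M` is nonempty, closed, `T(M) = M`, and `M` contains
no proper nonempty closed subset `M'` with `T(M') = M'`. -/
def IsMinimalSet {X : Type*} [TopologicalSpace X] (T : X ≃ₜ X) (M : Set X) : Prop :=
  M.Nonempty ∧ IsClosed M ∧ ⇑T '' M = M ∧
    ∀ M' ⊆ M, M'.Nonempty → IsClosed M' → ⇑T '' M' = M' → M' = M

/-!
A closed invariant set misses an open set `U` if and only if it misses the saturation
`⋃ n, Tⁿ(U)`, whose complement is itself closed and invariant. Hence `U` is a complete section
exactly when it meets every nonempty closed invariant set, and by Zorn's lemma it suffices to test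
minimal sets. Separating disjoint closed sets by clopen sets, a closed set is a quasi-section
exactly when it meets every minimal set. For `{x₀}` this says that `x₀` lies in every minimal set;
as distinct minimal sets are disjoint, there is then only one.
-/

section

open Set

variable {X : Type*} [TopologicalSpace X] {T : X ≃ₜ X} {F M N U W : Set X} {x : X}

/-- A *subsystem* of `(X,T)`: a nonempty closed set `F` with `T(F) = F`. The minimal sets are the
subsystems that are minimal for inclusion. -/
structure IsSubsystem (T : X ≃ₜ X) (F : Set X) : Prop where
  nonempty : F.Nonempty
  isClosed : IsClosed F
  image_eq : T '' F = F

/-- The *saturation* of `U`: the union of all translates `Tⁿ(U)`, `n ∈ ℤ`, which is the smallest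
invariant set containing `U`. By definition, `U` is a complete section if its saturation is `X`. -/
def saturation (T : X ≃ₜ X) (U : Set X) : Set X :=
  ⋃ n : ℤ, ⇑(T.toEquiv ^ n) '' U

theorem subset_saturation : U ⊆ saturation T U :=
  subset_iUnion_of_subset 0 (by simp)

theorem image_saturation : T '' saturation T U = saturation T U := by
  simp only [saturation, image_iUnion, ← image_comp]
  refine (Equiv.addLeft (1 : ℤ)).surjective.iSup_congr _ fun n => ?_
  rw [Equiv.coe_addLeft, zpow_one_add, Equiv.Perm.coe_mul, Homeomorph.coe_toEquiv]

theorem saturation_subset (hN : T '' N = N) (hUN : U ⊆ N) : saturation T U ⊆ N := by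
  refine iUnion_subset fun n => ?_
  have hbij : BijOn T.toEquiv N N := ⟨mapsTo_iff_image_subset.2 hN.subset, T.injective.injOn, hN.ge⟩
  exact (image_mono hUN).trans (hbij.perm_zpow n).image_eq.subset

theorem toEquiv_zpow (T : X ≃ₜ X) (n : ℤ) : (T ^ n).toEquiv = T.toEquiv ^ n :=
  map_zpow (⟨⟨Homeomorph.toEquiv, rfl⟩, fun _ _ => rfl⟩ : (X ≃ₜ X) →* Equiv.Perm X) T n

theorem isOpen_saturation (hU : IsOpen U) : IsOpen (saturation T U) := by
  refine isOpen_iUnion fun n => ?_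
  rw [← toEquiv_zpow]
  exact (T ^ n).isOpenMap U hU

theorem image_compl_eq_of_image_eq (hN : T '' N = N) : T '' Nᶜ = Nᶜ := by
  rw [image_compl_eq T.bijective, hN]

theorem isSubsystem_univ [Nonempty X] : IsSubsystem T univ :=
  ⟨univ_nonempty, isClosed_univ, image_univ_of_surjective T.surjective⟩

theorem IsSubsystem.inter (hM : IsSubsystem T M) (hN : IsSubsystem T N)
    (hMN : (M ∩ N).Nonempty) : IsSubsystem T (M ∩ N) :=
  ⟨hMN, hM.isClosed.inter hN.isClosed, by rw [image_inter T.injective, hM.image_eq, hN.image_eq]⟩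

theorem IsSubsystem.sInter_of_isChain {c : Set (Set X)} (hne : c.Nonempty)
    (hchain : IsChain (· ⊆ ·) c) (hc : ∀ M ∈ c, IsSubsystem T M)
    (hcompact : ∀ M ∈ c, IsCompact M) : IsSubsystem T (⋂₀ c) where
  nonempty :=
    have : Nonempty c := hne.to_subtype
    have hchain' : IsChain (· ⊇ ·) c := hchain.symm
    IsCompact.nonempty_sInter_of_directed_nonempty_isCompact_isClosed hchain'.directedOn
      (fun M hM => (hc M hM).nonempty) hcompact fun M hM => (hc M hM).isClosed
  isClosed := isClosed_sInter fun M hM => (hc M hM).isClosed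
  image_eq := by
    rw [sInter_eq_biInter, image_iInter₂ T.bijective]
    exact iInter₂_congr fun M hM => (hc M hM).image_eq

theorem isMinimalSet_iff_minimal : IsMinimalSet T M ↔ Minimal (IsSubsystem T) M := by
  constructor
  · rintro ⟨hne, hcl, hinv, hmin⟩
    exact ⟨⟨hne, hcl, hinv⟩, fun N hN hNM =>
      (hmin N hNM hN.nonempty hN.isClosed hN.image_eq).ge⟩
  · intro h
    exact ⟨h.prop.nonempty, h.prop.isClosed, h.prop.image_eq, fun N hNM hne hcl hinv =>
      h.eq_of_subset ⟨hne, hcl, hinv⟩ hNM⟩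

theorem IsMinimalSet.isSubsystem (hM : IsMinimalSet T M) : IsSubsystem T M :=
  (isMinimalSet_iff_minimal.1 hM).prop

theorem IsMinimalSet.subset_of_inter_nonempty (hM : IsMinimalSet T M) (hN : IsSubsystem T N)
    (hMN : (M ∩ N).Nonempty) : M ⊆ N :=
  inter_eq_left.1 <|
    (isMinimalSet_iff_minimal.1 hM).eq_of_subset (hM.isSubsystem.inter hN hMN) inter_subset_left

theorem IsMinimalSet.eq_of_inter_nonempty (hM : IsMinimalSet T M) (hN : IsMinimalSet T N)
    (hMN : (M ∩ N).Nonempty) : M = N :=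
  (hM.subset_of_inter_nonempty hN.isSubsystem hMN).antisymm <|
    hN.subset_of_inter_nonempty hM.isSubsystem (inter_comm M N ▸ hMN)

theorem IsSubsystem.exists_isMinimalSet_subset (hF : IsSubsystem T F) (hcompact : IsCompact F) :
    ∃ M ⊆ F, IsMinimalSet T M := by
  obtain ⟨M, hMF, hM⟩ := zorn_superset_nonempty {M | IsSubsystem T M ∧ M ⊆ F}
    (fun c hcS hchain hne => by
      have hsub : ⋂₀ c ⊆ F := (sInter_subset_of_mem hne.some_mem).trans (hcS hne.some_mem).2
      have hsys : IsSubsystem T (⋂₀ c) :=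
        .sInter_of_isChain hne hchain (fun M hM => (hcS hM).1) fun M hM =>
          hcompact.of_isClosed_subset (hcS hM).1.isClosed (hcS hM).2
      exact ⟨⋂₀ c, ⟨hsys, hsub⟩, fun _ => sInter_subset_of_mem⟩) F ⟨hF, Subset.rfl⟩
  exact ⟨M, hMF, isMinimalSet_iff_minimal.2 ⟨hM.prop.1, fun N hN hNM =>
    hM.le_of_le ⟨hN, hNM.trans hMF⟩ hNM⟩⟩

theorem existsUnique_isMinimalSet_of_forall_mem [CompactSpace X]
    (hx : ∀ M, IsMinimalSet T M → x ∈ M) : ∃! M, IsMinimalSet T M := by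
  have : Nonempty X := ⟨x⟩
  obtain ⟨M, -, hM⟩ := (isSubsystem_univ (T := T)).exists_isMinimalSet_subset isCompact_univ
  exact ⟨M, hM, fun N hN => hN.eq_of_inter_nonempty hM ⟨x, hx N hN, hx M hM⟩⟩

theorem isCompleteSection_iff_forall_isSubsystem (hU : IsOpen U) :
    IsCompleteSection T U ↔ ∀ F, IsSubsystem T F → (F ∩ U).Nonempty := by
  constructor
  · intro h F hF
    rw [← not_disjoint_iff_nonempty_inter]
    intro hdisj
    have hsat : saturation T U ⊆ Fᶜ :=
      saturation_subset (image_compl_eq_of_image_eq hF.image_eq) hdisj.subset_compl_left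
    obtain ⟨y, hy⟩ := hF.nonempty
    exact hsat (h.ge (mem_univ y)) hy
  · intro h
    by_contra hne
    have hF : IsSubsystem T (saturation T U)ᶜ :=
      ⟨nonempty_compl.2 hne, (isOpen_saturation hU).isClosed_compl,
        image_compl_eq_of_image_eq image_saturation⟩
    obtain ⟨y, hy, hyU⟩ := h _ hF
    exact hy (subset_saturation hyU)

theorem isCompleteSection_iff_forall_isMinimalSet [CompactSpace X] (hU : IsOpen U) :
    IsCompleteSection T U ↔ ∀ M, IsMinimalSet T M → (M ∩ U).Nonempty := by
  rw [isCompleteSection_iff_forall_isSubsystem hU]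
  refine ⟨fun h M hM => h M hM.isSubsystem, fun h F hF => ?_⟩
  obtain ⟨M, hMF, hM⟩ := hF.exists_isMinimalSet_subset hF.isClosed.isCompact
  exact (h M hM).mono (inter_subset_inter_left U hMF)

theorem isQuasiSection_iff_forall_isMinimalSet [CompactSpace X] [T2Space X]
    [TotallyDisconnectedSpace X] (hW : IsClosed W) :
    IsQuasiSection T W ↔ ∀ M, IsMinimalSet T M → (M ∩ W).Nonempty := by
  constructor
  · rintro ⟨-, h⟩ M hM
    rw [← not_disjoint_iff_nonempty_inter]
    intro hdisj
    have hMo : IsOpen Mᶜ := hM.isSubsystem.isClosed.isOpen_compl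
    obtain ⟨U, hU, hWU, hUM⟩ :=
      exists_clopen_of_closed_subset_open hW hMo hdisj.subset_compl_left
    obtain ⟨y, hyM, hyU⟩ :=
      (isCompleteSection_iff_forall_isMinimalSet hU.isOpen).1 (h U hU hWU) M hM
    exact hUM hyU hyM
  · intro h
    exact ⟨hW, fun U hU hWU => (isCompleteSection_iff_forall_isMinimalSet hU.isOpen).2
      fun M hM => (h M hM).mono (inter_subset_inter_right M hWU)⟩

theorem stmt8_general [CompactSpace X] [T2Space X] [TotallyDisconnectedSpace X]
    (T : X ≃ₜ X) (x₀ : X) :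
    IsQuasiSection T {x₀} ↔
      (∃! M : Set X, IsMinimalSet T M) ∧ ∀ M : Set X, IsMinimalSet T M → x₀ ∈ M := by
  simp only [isQuasiSection_iff_forall_isMinimalSet isClosed_singleton,
    inter_singleton_nonempty]
  exact ⟨fun h => ⟨existsUnique_isMinimalSet_of_forall_mem h, h⟩, And.right⟩

end

/-- For a zero dimensional dynamical system `(X,T)` and `x₀ ∈ X`, the singleton `{x₀}` is a
quasi-section if and only if `(X,T)` is essentially minimal (has exactly one minimal set)
and `x₀` belongs to the unique minimal set. -/
theorem stmt8 {X : Type*} [TopologicalSpace X] [CompactSpace X]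
    [TopologicalSpace.MetrizableSpace X] [TotallyDisconnectedSpace X] [Nonempty X]
    (T : X ≃ₜ X) (x₀ : X) :
    IsQuasiSection T {x₀} ↔
      (∃! M : Set X, IsMinimalSet T M) ∧ ∀ M : Set X, IsMinimalSet T M → x₀ ∈ M :=
  stmt8_general T x₀
end

section
/- Let (X,T) and (Y,S) be zero dimensional dynamical systems and let α : X → Y be a topological factoring, i.e., a continuous surjection with α ∘ T = S ∘ α. If X₀ ⊆ X is a quasi-section for (X,T), then α(X₀) is a quasi-section for (Y,S). -/
theorem semiconj_perm_zpow {X Y : Type*} {α : X → Y} {f : Equiv.Perm X} {g : Equiv.Perm Y}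
    (h : Function.Semiconj α f g) (n : ℤ) : Function.Semiconj α ⇑(f ^ n) ⇑(g ^ n) := by
  have h_pow (k : ℕ) : Function.Semiconj α ⇑(f ^ k) ⇑(g ^ k) := by
    simpa only [Equiv.Perm.coe_pow] using h.iterate_right k
  obtain ⟨k, rfl | rfl⟩ := n.eq_nat_or_neg
  · simpa only [zpow_natCast] using h_pow k
  · rw [zpow_neg, zpow_neg, zpow_natCast, zpow_natCast]
    exact (h_pow k).inverses_right (f ^ k).right_inv (g ^ k).left_inv

theorem IsCompleteSection.of_preimage {X Y : Type*} [TopologicalSpace X] [TopologicalSpace Y]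
    {T : X ≃ₜ X} {S : Y ≃ₜ Y} {α : X → Y} (h_surj : Function.Surjective α)
    (h_semiconj : Function.Semiconj α T S) {U : Set Y} (hU : IsCompleteSection T (α ⁻¹' U)) :
    IsCompleteSection S U := by
  have h_zpow (n : ℤ) : Function.Semiconj α ⇑(T.toEquiv ^ n) ⇑(S.toEquiv ^ n) :=
    semiconj_perm_zpow h_semiconj n
  calc ⋃ n : ℤ, ⇑(S.toEquiv ^ n) '' U
      = ⋃ n : ℤ, ⇑(S.toEquiv ^ n) '' (α '' (α ⁻¹' U)) := by
        rw [Set.image_preimage_eq U h_surj]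
    _ = ⋃ n : ℤ, α '' (⇑(T.toEquiv ^ n) '' (α ⁻¹' U)) :=
        Set.iUnion_congr fun n ↦ ((h_zpow n).set_image (α ⁻¹' U)).symm
    _ = α '' ⋃ n : ℤ, ⇑(T.toEquiv ^ n) '' (α ⁻¹' U) := Set.image_iUnion.symm
    _ = α '' Set.univ := congrArg (α '' ·) hU
    _ = Set.univ := Set.image_univ_of_surjective h_surj

theorem stmt9_general {X Y : Type*} [TopologicalSpace X] [TopologicalSpace Y]
    {T : X ≃ₜ X} {S : Y ≃ₜ Y} {α : X → Y} (h_cont : Continuous α) (h_closed : IsClosedMap α)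
    (h_surj : Function.Surjective α) (h_semiconj : Function.Semiconj α T S)
    {W : Set X} (hW : IsQuasiSection T W) : IsQuasiSection S (α '' W) := by
  refine ⟨h_closed W hW.1, fun U hU hWU ↦ ?_⟩
  exact .of_preimage h_surj h_semiconj
    (hW.2 (α ⁻¹' U) (hU.preimage h_cont) (Set.image_subset_iff.mp hWU))

/-- Let `(X,T)` and `(Y,S)` be zero dimensional dynamical systems and `α : X → Y` a
topological factoring (continuous surjection with `α ∘ T = S ∘ α`). If `X₀` is a
quasi-section for `(X,T)` then `α(X₀)` is a quasi-section for `(Y,S)`. -/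
theorem stmt9 {X Y : Type*} [TopologicalSpace X] [CompactSpace X]
    [TopologicalSpace.MetrizableSpace X] [TotallyDisconnectedSpace X] [Nonempty X]
    [TopologicalSpace Y] [CompactSpace Y]
    [TopologicalSpace.MetrizableSpace Y] [TotallyDisconnectedSpace Y] [Nonempty Y]
    (T : X ≃ₜ X) (S : Y ≃ₜ Y) (α : X → Y)
    (hαcont : Continuous α) (hαsurj : Function.Surjective α)
    (hαequiv : α ∘ ⇑T = ⇑S ∘ α)
    (X₀ : Set X) (hX₀ : IsQuasiSection T X₀) :
    IsQuasiSection S (α '' X₀) :=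
  stmt9_general hαcont hαcont.isClosedMap hαsurj (Function.semiconj_iff_comp_eq.mpr hαequiv) hX₀
end

section
/- Let V₁, V₂, W₁, W₂ be finite nonempty sets and let F₁ : V₁ → W₁, F₂ : V₂ → W₂, G₂ : V₂ → W₂, E : V₁ → V₂, and S : W₁ → W₂ be ordered sets of edges. Suppose there are order isomorphisms γ : E ∘ F₂ → F₁ ∘ S and η : E ∘ G₂ → F₁ ∘ S which are compatible in the first coordinate, meaning that whenever γ(e,f) = η(e',g) for (e,f) ∈ E ∘ F₂ and (e',g) ∈ E ∘ G₂, one has e = e'. Then F₂ and G₂ are order isomorphic. -/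
/-- The reverse lexicographic order on pairs: `(t,g) ≤ (t',g')` iff `g < g'`, or `g = g'`
and `t ≤ t'`. This is the order used on compositions of ordered sets of edges. -/
def revLexLE {A B : Type*} [PartialOrder A] [PartialOrder B] (p q : A × B) : Prop :=
  p.2 < q.2 ∨ (p.2 = q.2 ∧ p.1 ≤ q.1)

/-- `(E, s, r, ≤)` is an *ordered set of edges* from `V` to `W`: the source and range maps
are surjective, and two edges are comparable (in the partial order on `E`) if and only if
they have the same range; in particular the order is total on each range fiber. -/
structure IsOrderedEdgeSet {V W E : Type*} [PartialOrder E]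
    (s : E → V) (r : E → W) : Prop where
  s_surj : Function.Surjective s
  r_surj : Function.Surjective r
  comparable_iff : ∀ e e' : E, (e ≤ e' ∨ e' ≤ e) ↔ r e = r e'

/-!
Composing `γ` with `η⁻¹` gives an order isomorphism `θ : E ∘ F₂ → E ∘ G₂` of the form
`θ (e, f) = (e, φₑ f)`, where each `φₑ` is an order isomorphism from the edges of `F₂` with source
`r(e)` to those of `G₂`. If `e ≤ e'` have the same range, then `(e, f) ≤ (e', f)` yields
`φₑ f ≤ φₑ' f`, while the same inequality for `θ⁻¹` yields `φₑ' f ≤ φₑ f`. Since the range fibres of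
`E` are totally ordered, `φₑ` depends only on `r(e)`, so the `φₑ` glue to one isomorphism `F₂ ≅ G₂`.
-/

theorem revLexLE_of_le {A B : Type*} [PartialOrder A] [PartialOrder B] {p q : A × B}
    (h : p ≤ q) : revLexLE p q :=
  h.2.lt_or_eq.imp_right fun h₂ => ⟨h₂, h.1⟩

theorem revLexLE.snd_le {A B : Type*} [PartialOrder A] [PartialOrder B] {p q : A × B}
    (h : revLexLE p q) : p.2 ≤ q.2 :=
  h.elim le_of_lt fun h => h.1.le

theorem pullback_snd_surjective {V E F : Type*} {r : E → V} (hsurj : Function.Surjective r)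
    (s : F → V) : Function.Surjective (Function.Pullback.snd : r.Pullback s → F) := fun f =>
  let ⟨e, he⟩ := hsurj (s f)
  ⟨⟨(e, f), he⟩, rfl⟩

/-- The order of the composition of two ordered sets of edges. The composition of edges with range
map `r` and edges with source map `s` is encoded as the pullback of `r` and `s`, and the order
relation is kept unbundled so that order isomorphisms of compositions are relation isomorphisms. -/
def edgeCompLE {V E F : Type*} [PartialOrder E] [PartialOrder F] (r : E → V) (s : F → V)
    (p q : r.Pullback s) : Prop :=
  revLexLE p.val q.val

namespace edgeCompLE

variable {V E F G : Type*} [PartialOrder E] [PartialOrder F] [PartialOrder G]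
  {r : E → V} {s : F → V} {t : G → V}

theorem snd_map_le_snd_map (θ : edgeCompLE r s ≃r edgeCompLE r t) {p q : r.Pullback s}
    (h : p.val ≤ q.val) : (θ p).snd ≤ (θ q).snd :=
  (θ.map_rel_iff.2 (revLexLE_of_le h)).snd_le

theorem fst_symm_map {θ : edgeCompLE r s ≃r edgeCompLE r t} (hθ : ∀ p, (θ p).fst = p.fst)
    (q : r.Pullback t) : (θ.symm q).fst = q.fst := by
  rw [← hθ, θ.apply_symm_apply]

theorem source_snd_map {θ : edgeCompLE r s ≃r edgeCompLE r t} (hθ : ∀ p, (θ p).fst = p.fst)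
    (p : r.Pullback s) : t (θ p).snd = s p.snd :=
  calc
    t (θ p).snd = r (θ p).fst := (θ p).property.symm
    _ = r p.fst := by rw [hθ]
    _ = s p.snd := p.property

theorem snd_map_eq_of_fst_le {θ : edgeCompLE r s ≃r edgeCompLE r t}
    (hθ : ∀ p, (θ p).fst = p.fst) {p q : r.Pullback s} (hfst : p.fst ≤ q.fst)
    (hsnd : p.snd = q.snd) : (θ p).snd = (θ q).snd := by
  apply le_antisymm (snd_map_le_snd_map θ ⟨hfst, hsnd.le⟩)
  have hq : r q.fst = t (θ p).snd :=
    calc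
      r q.fst = s q.snd := q.property
      _ = t (θ p).snd := by rw [source_snd_map hθ, hsnd]
  let q' : r.Pullback t := ⟨(q.fst, (θ p).snd), hq⟩
  have hle : p.snd ≤ (θ.symm q').snd := by
    simpa only [θ.symm_apply_apply] using
      snd_map_le_snd_map θ.symm (p := θ p) (q := q') ⟨(hθ p).trans_le hfst, le_rfl⟩
  have hle' : q.val ≤ (θ.symm q').val := ⟨(fst_symm_map hθ q').ge, hsnd.symm.trans_le hle⟩
  calc
    (θ q).snd ≤ (θ (θ.symm q')).snd := snd_map_le_snd_map θ hle'
    _ = q'.snd := by rw [θ.apply_symm_apply]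

theorem snd_map_eq_of_snd_eq (htotal : ∀ e e', r e = r e' → e ≤ e' ∨ e' ≤ e)
    {θ : edgeCompLE r s ≃r edgeCompLE r t} (hθ : ∀ p, (θ p).fst = p.fst)
    {p q : r.Pullback s} (hsnd : p.snd = q.snd) : (θ p).snd = (θ q).snd := by
  have hrange : r p.fst = r q.fst :=
    calc
      r p.fst = s p.snd := p.property
      _ = s q.snd := by rw [hsnd]
      _ = r q.fst := q.property.symm
  rcases htotal _ _ hrange with hle | hle
  · exact snd_map_eq_of_fst_le hθ hle hsnd
  · exact (snd_map_eq_of_fst_le hθ hle hsnd.symm).symm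

theorem exists_orderHom_snd_map_eq (hsurj : Function.Surjective r)
    (htotal : ∀ e e', r e = r e' → e ≤ e' ∨ e' ≤ e)
    {θ : edgeCompLE r s ≃r edgeCompLE r t} (hθ : ∀ p, (θ p).fst = p.fst) :
    ∃ φ : F →o G, ∀ p, (θ p).snd = φ p.snd := by
  choose c hc using pullback_snd_surjective hsurj s
  have hmono : Monotone fun f => (θ (c f)).snd := by
    intro f f' hff'
    rcases hff'.eq_or_lt with rfl | hlt
    · exact le_rfl
    · have hcc' : edgeCompLE r s (c f) (c f') := Or.inl (by rwa [← hc f, ← hc f'] at hlt)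
      exact (θ.map_rel_iff.2 hcc').snd_le
  exact ⟨⟨_, hmono⟩, fun p => snd_map_eq_of_snd_eq htotal hθ (hc p.snd).symm⟩

theorem exists_orderIso_snd_map_eq (hsurj : Function.Surjective r)
    (htotal : ∀ e e', r e = r e' → e ≤ e' ∨ e' ≤ e)
    {θ : edgeCompLE r s ≃r edgeCompLE r t} (hθ : ∀ p, (θ p).fst = p.fst) :
    ∃ φ : F ≃o G, ∀ p, (θ p).snd = φ p.snd := by
  obtain ⟨φ, hφ⟩ := exists_orderHom_snd_map_eq hsurj htotal hθ
  obtain ⟨ψ, hψ⟩ := exists_orderHom_snd_map_eq hsurj htotal (fst_symm_map hθ)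
  have hφψ : φ.comp ψ = OrderHom.id := by
    ext g
    obtain ⟨q, rfl⟩ := pullback_snd_surjective hsurj t g
    simp only [OrderHom.comp_coe, Function.comp_apply, OrderHom.id_coe, id, ← hψ, ← hφ,
      θ.apply_symm_apply]
  have hψφ : ψ.comp φ = OrderHom.id := by
    ext f
    obtain ⟨p, rfl⟩ := pullback_snd_surjective hsurj s f
    simp only [OrderHom.comp_coe, Function.comp_apply, OrderHom.id_coe, id, ← hψ, ← hφ,
      θ.symm_apply_apply]
  exact ⟨OrderIso.ofHomInv φ ψ hφψ hψφ, hφ⟩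

end edgeCompLE

theorem stmt10_general {V W E F G X : Type*} [PartialOrder E] [PartialOrder F] [PartialOrder G]
    {rE : E → V} (hsurj : Function.Surjective rE)
    (htotal : ∀ e e', rE e = rE e' → e ≤ e' ∨ e' ≤ e)
    {sF : F → V} {rF : F → W} {sG : G → V} {rG : G → W} {le : X → X → Prop} {rX : X → W}
    (γ : edgeCompLE rE sF ≃r le) (η : edgeCompLE rE sG ≃r le)
    (hγ : ∀ p, rX (γ p) = rF p.snd) (hη : ∀ p, rX (η p) = rG p.snd)
    (hcompat : ∀ p q, γ p = η q → p.fst = q.fst) :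
    ∃ φ : F ≃o G, (∀ f, sG (φ f) = sF f) ∧ ∀ f, rG (φ f) = rF f := by
  let θ := γ.trans η.symm
  have hηθ : ∀ p, η (θ p) = γ p := fun p => η.apply_symm_apply (γ p)
  have hθ : ∀ p, (θ p).fst = p.fst := fun p => (hcompat p (θ p) (hηθ p).symm).symm
  obtain ⟨φ, hφ⟩ := edgeCompLE.exists_orderIso_snd_map_eq hsurj htotal hθ
  have hsnd := pullback_snd_surjective hsurj sF
  refine ⟨φ, hsnd.forall.2 fun p => ?_, hsnd.forall.2 fun p => ?_⟩
  · rw [← hφ, edgeCompLE.source_snd_map hθ]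
  · rw [← hφ, ← hη, hηθ, hγ]

/-- Let `F₁ : V₁ → W₁`, `F₂, G₂ : V₂ → W₂`, `E : V₁ → V₂` and `S : W₁ → W₂` be ordered sets
of edges, and let `γ : E ∘ F₂ → F₁ ∘ S` and `η : E ∘ G₂ → F₁ ∘ S` be order isomorphisms
(bijections preserving source, range, and order in both directions, where the compositions
carry the reverse lexicographic order) which are compatible in the first coordinate:
`γ(e,f) = η(e',g)` implies `e = e'`. Then `F₂ ≅ G₂`, i.e. there is a bijection `φ`
from the edges of `F₂` to the edges of `G₂` preserving sources, ranges, and the order in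
both directions. -/
theorem stmt10
    {V₁ V₂ W₁ W₂ : Type*} [Fintype V₁] [Nonempty V₁] [Fintype V₂] [Nonempty V₂]
    [Fintype W₁] [Nonempty W₁] [Fintype W₂] [Nonempty W₂]
    {EF1 EF2 EG2 EE ES : Type*}
    [Fintype EF1] [Nonempty EF1] [PartialOrder EF1]
    [Fintype EF2] [Nonempty EF2] [PartialOrder EF2]
    [Fintype EG2] [Nonempty EG2] [PartialOrder EG2]
    [Fintype EE] [Nonempty EE] [PartialOrder EE]
    [Fintype ES] [Nonempty ES] [PartialOrder ES]
    (sF1 : EF1 → V₁) (rF1 : EF1 → W₁) (hF1 : IsOrderedEdgeSet sF1 rF1)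
    (sF2 : EF2 → V₂) (rF2 : EF2 → W₂) (hF2 : IsOrderedEdgeSet sF2 rF2)
    (sG2 : EG2 → V₂) (rG2 : EG2 → W₂) (hG2 : IsOrderedEdgeSet sG2 rG2)
    (sE : EE → V₁) (rE : EE → V₂) (hE : IsOrderedEdgeSet sE rE)
    (sS : ES → W₁) (rS : ES → W₂) (hS : IsOrderedEdgeSet sS rS)
    -- `γ : E ∘ F₂ → F₁ ∘ S` and `η : E ∘ G₂ → F₁ ∘ S`
    (γ : {p : EE × EF2 // rE p.1 = sF2 p.2} → {p : EF1 × ES // rF1 p.1 = sS p.2})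
    (η : {p : EE × EG2 // rE p.1 = sG2 p.2} → {p : EF1 × ES // rF1 p.1 = sS p.2})
    (hγbij : Function.Bijective γ) (hηbij : Function.Bijective η)
    -- `γ` and `η` intertwine sources and ranges of the compositions
    (hγs : ∀ p, sF1 (γ p).val.1 = sE p.val.1)
    (hγr : ∀ p, rS (γ p).val.2 = rF2 p.val.2)
    (hηs : ∀ p, sF1 (η p).val.1 = sE p.val.1)
    (hηr : ∀ p, rS (η p).val.2 = rG2 p.val.2)
    -- `γ` and `η` preserve the reverse lexicographic order in both directions
    (hγord : ∀ p q, revLexLE p.val q.val ↔ revLexLE (γ p).val (γ q).val)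
    (hηord : ∀ p q, revLexLE p.val q.val ↔ revLexLE (η p).val (η q).val)
    -- compatibility in the first coordinate
    (hcompat : ∀ p q, γ p = η q → p.val.1 = q.val.1) :
    ∃ φ : EF2 ≃ EG2, (∀ e, sG2 (φ e) = sF2 e) ∧ (∀ e, rG2 (φ e) = rF2 e) ∧
      ∀ e e', e ≤ e' ↔ φ e ≤ φ e' := by
  obtain ⟨φ, hs, hr⟩ := stmt10_general (le := edgeCompLE rF1 sS) (rX := fun p => rS p.snd)
    hE.r_surj (fun e e' => (hE.comparable_iff e e').2) ⟨.ofBijective γ hγbij, (hγord _ _).symm⟩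
    ⟨.ofBijective η hηbij, (hηord _ _).symm⟩ hγr hηr hcompat
  exact ⟨φ.toEquiv, hs, hr, fun _ _ => φ.map_rel_iff.symm⟩
end
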